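/- arXiv:2311.01114 — 2 statements merged into one kernel-verified Lean document; each statement's English description precedes it below -/
import Mathlib

section
/- Let X be a finite non-degenerate indecomposable cycle set whose cardinality is p₁ ⋯ p_n, a product of n pairwise distinct prime numbers. Then fpl(X) = n. -/
/-!
The number of prime factors of the cardinality bounds the length of a chain: the image of an
indecomposable cycle set is indecomposable and the fibres of an epimorphism have equal size
(`IsHom.card_eq`), so each proper epimorphism loses a prime factor (`le_of_hasChain`). Since an
indecomposable cycle set of prime size is primitive, the theorem reduces to finding, for `X` of
squarefree size, an epimorphism losing exactly one prime factor (`exists_epi`).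

The group `G = G(X)` is the multiplicative group of a left brace whose additive group is generated,
as a `G`-module, by one element with stabilizer of squarefree index (`exists_brace`). The heart of
the proof is that such a brace has a nontrivial socle (`BraceData.exists_ker`). Simultaneously, by
induction on the order, no proper subbrace contains such a generator. If the socle is nontrivial,
dividing it out settles the claim on subbraces. For the socle itself, the solvability of `G` provides
a nontrivial normal `p`-subgroup; the squarefree index gives a generator of the `p'`-part of the
additive group that is fixed by the Sylow `p`-subgroup `P` attached to the brace, and since the fixed
points of `P` form a subbrace, `P` acts trivially on the `p'`-part. Hence `P` is normal, and it is
abelian because it acts through an abelian group on orbits of squarefree size; a fixed point of `P`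
in its own additive group lies in the socle.

The `p`-torsion of the socle is then a nontrivial normal `p`-subgroup `N` of `G` with
`σ_{k(x)} = σ_x` for `k` in `N`, so its orbits are the classes of a congruence; they have equal size,
a power of `p` dividing a squarefree number, that is, size `p`.

Solvability of `G` holds for every finite brace. It uses Burnside's theorem on groups whose order has
at most two prime divisors and Wielandt's theorem on three solvable subgroups of coprime indices,
both proved below.
-/

/-- A cycle set: each left multiplication `σ_x = op x` is bijective and
`(x·y)·(x·z) = (y·x)·(y·z)`. -/
structure CycleSet (X : Type) where
  op : X → X → X
  bij : ∀ x, Function.Bijective (op x)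
  cyc : ∀ x y z, op (op x y) (op x z) = op (op y x) (op y z)

namespace CycleSet

variable {X Y : Type}

/-- The left multiplication `σ_x` as a permutation of `X`. -/
noncomputable def sigma (C : CycleSet X) (x : X) : Equiv.Perm X :=
  Equiv.ofBijective _ (C.bij x)

/-- Non-degeneracy: the squaring map `x ↦ x·x` is bijective. -/
def Nondeg (C : CycleSet X) : Prop := Function.Bijective fun x => C.op x x

/-- The associated permutation group `G(X)`, generated by the `σ_x`. -/
noncomputable def G (C : CycleSet X) : Subgroup (Equiv.Perm X) :=
  Subgroup.closure (Set.range C.sigma)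

/-- The displacement group `Dis(X)`, generated by the `σ_x σ_y⁻¹`. -/
noncomputable def Dis (C : CycleSet X) : Subgroup (Equiv.Perm X) :=
  Subgroup.closure {g | ∃ x y, g = C.sigma x * (C.sigma y)⁻¹}

/-- A subgroup of `Sym(X)` acts transitively on `X`. -/
def SubgroupTransitive (H : Subgroup (Equiv.Perm X)) : Prop :=
  ∀ a b : X, ∃ g ∈ H, g a = b

/-- Indecomposability: `G(X)` acts transitively on `X`. -/
def Indec (C : CycleSet X) : Prop := SubgroupTransitive C.G

/-- A trivial cycle set: all left multiplications coincide. -/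
def IsTrivial (C : CycleSet X) : Prop := ∀ x y z, C.op x z = C.op y z

/-- Cycle set homomorphism. -/
def IsHom (C : CycleSet X) (D : CycleSet Y) (f : X → Y) : Prop :=
  ∀ a b : X, f (C.op a b) = D.op (f a) (f b)

/-- A block for the action of `G(X)` on `X`. -/
def IsBlock (C : CycleSet X) (s : Set X) : Prop :=
  ∀ g ∈ C.G, (⇑g '' s = s ∨ Disjoint (⇑g '' s) s)

/-- Primitivity: `G(X)` acts transitively on `X` and all blocks are trivial. -/
def Primitive (C : CycleSet X) : Prop :=
  C.Indec ∧ ∀ s : Set X, C.IsBlock s → s.Subsingleton ∨ s = Set.univ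

/-- There is a chain `X = X₁ → X₂ → ⋯ → X_k` of epimorphisms of cycle sets with
`|X_i| > |X_{i+1}| > 1` for `1 ≤ i ≤ k-1` and with `X_k` primitive. -/
def HasChain [Finite X] (C : CycleSet X) (k : ℕ) : Prop :=
  ∃ (T : ℕ → Type) (_ : ∀ i, Finite (T i)) (CS : ∀ i, CycleSet (T i)) (e : X → T 0),
    Function.Bijective e ∧ IsHom C (CS 0) e ∧
    (∀ i, i + 1 < k → Nat.card (T (i + 1)) < Nat.card (T i) ∧ 1 < Nat.card (T (i + 1))) ∧
    (∀ i, i + 1 < k → ∃ p : T i → T (i + 1),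
      Function.Surjective p ∧ IsHom (CS i) (CS (i + 1)) p) ∧
    (CS (k - 1)).Primitive

/-- `X` has finite primitive level: some chain as above exists (of positive length). -/
def HasFPL [Finite X] (C : CycleSet X) : Prop := ∃ k, 1 ≤ k ∧ HasChain C k

/-- `fpl(X) = k`: `k` is the largest positive integer admitting a chain as above. -/
def fplEq [Finite X] (C : CycleSet X) (k : ℕ) : Prop :=
  1 ≤ k ∧ HasChain C k ∧ ∀ m, 1 ≤ m → HasChain C m → m ≤ k

end CycleSet

/-! ### Burnside's theorem -/

/-- An algebraic integer that is an average of roots of unity is zero or of absolute value one: all its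
conjugates lie in the closed unit disc, so Kronecker's theorem applies. -/
theorem avg_roots {N : ℕ} (hN : 0 < N) (s : Multiset ℂ) (hs : ∀ z ∈ s, z ^ N = 1)
    (hTr : IsIntegral ℤ (s.sum / s.card)) :
    s.sum = 0 ∨ ‖s.sum‖ = s.card := by
  set ζ := Complex.exp (2 * Real.pi * Complex.I / N) with hζ
  have hprim : IsPrimitiveRoot ζ N := Complex.isPrimitiveRoot_exp N hN.ne'
  let K := IntermediateField.adjoin ℚ {ζ}
  have hfd : FiniteDimensional ℚ K :=
    IntermediateField.adjoin.finiteDimensional ((hprim.isIntegral hN).tower_top)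
  have : NumberField K := ⟨⟩
  have : NeZero N := ⟨hN.ne'⟩
  have hζK : ζ ∈ K := IntermediateField.mem_adjoin_simple_self ℚ ζ
  have hsK : ∀ z ∈ s, z ∈ K := fun z hz => by
    obtain ⟨i, -, rfl⟩ := hprim.eq_pow_of_pow_eq_one (hs z hz)
    exact pow_mem hζK i
  obtain ⟨t, rfl⟩ : ∃ t : Multiset K, t.map (fun x : K => (x : ℂ)) = s := by
    lift s to Multiset K using hsK
    exact ⟨s, rfl⟩
  by_cases h0 : (t.map (fun x : K => (x : ℂ))).sum = 0
  · exact Or.inl h0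
  right
  have hc : t.card ≠ 0 := by
    intro h
    rw [Multiset.card_eq_zero] at h
    simp [h] at h0
  set α : K := t.sum / t.card with hα
  have hcoe : ((α : K) : ℂ) = (t.map (fun x : K => (x : ℂ))).sum / t.card := by
    have : (t.map (fun x : K => (x : ℂ))).sum = ((t.sum : K) : ℂ) :=
      (map_multiset_sum (algebraMap K ℂ) t).symm
    rw [this, hα]; push_cast; rfl
  have hαi : IsIntegral ℤ α := by
    rw [← isIntegral_algebraMap_iff (algebraMap K ℂ).injective (R := ℤ)]
    change IsIntegral ℤ (α : ℂ)
    rw [hcoe]; simpa using hTr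
  have hα0 : α ≠ 0 := by
    intro h
    rw [h] at hcoe
    have : (t.map (fun x : K => (x : ℂ))).sum / (t.card : ℂ) ≠ 0 :=
      div_ne_zero h0 (by exact_mod_cast hc)
    exact this (by rw [← hcoe]; rfl)
  have hroot : ∀ x ∈ t, x ^ N = 1 := fun x hx => by
    have := hs x (Multiset.mem_map_of_mem _ hx)
    exact_mod_cast this
  have hle : ∀ φ : K →+* ℂ, ‖φ α‖ ≤ 1 := fun φ => by
    rw [hα, map_div₀, map_multiset_sum, map_natCast, norm_div, Complex.norm_natCast]
    rw [div_le_one (by positivity)]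
    refine (Multiset.le_sum_of_subadditive (fun z : ℂ => ‖z‖) (by simp) norm_add_le _).trans ?_
    rw [Multiset.map_map]
    refine (Multiset.sum_le_card_nsmul _ 1 ?_).trans (by simp)
    intro x hx
    obtain ⟨y, hy, rfl⟩ := Multiset.mem_map.1 hx
    have : (φ y) ^ N = 1 := by rw [← map_pow, hroot y hy, map_one]
    exact (Complex.norm_eq_one_of_pow_eq_one this hN.ne').le
  obtain ⟨n, hn, hpow⟩ := NumberField.Embeddings.pow_eq_one_of_norm_le_one K ℂ hα0 hαi hle
  have h1 : ‖(α : ℂ)‖ = 1 := by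
    apply Complex.norm_eq_one_of_pow_eq_one (n := n) _ hn.ne'
    exact_mod_cast congrArg (fun x : K => (x : ℂ)) hpow
  rw [hcoe, norm_div, Complex.norm_natCast, div_eq_one_iff_eq (by exact_mod_cast hc)] at h1
  simpa using h1

/-- The equality case of the triangle inequality for complex numbers of absolute value one. -/
theorem all_eq_of_norm_sum (s : Multiset ℂ) (hs : ∀ z ∈ s, ‖z‖ = 1)
    (hnorm : ‖s.sum‖ = s.card) : ∃ μ : ℂ, ∀ z ∈ s, z = μ := by
  by_cases h0 : s = 0
  · exact ⟨0, by simp [h0]⟩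
  have hS : (s.card : ℝ) ≠ 0 := by simpa using h0
  have hS0 : s.sum ≠ 0 := by intro h; rw [h, norm_zero] at hnorm; exact hS hnorm.symm
  -- rotate by the unit `w` that makes the sum a positive real
  set w : ℂ := (starRingEnd ℂ) s.sum / ‖s.sum‖ with hw
  have hwS : w * s.sum = s.card := by
    rw [hw, div_mul_eq_mul_div, mul_comm, Complex.mul_conj, Complex.normSq_eq_norm_sq, hnorm]
    push_cast
    field_simp
  have hw1 : ‖w‖ = 1 := by
    rw [hw, norm_div, RCLike.norm_conj, Complex.norm_real, norm_norm, div_self (by simpa using hS0)]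
  have hre : ∀ z ∈ s, 0 ≤ 1 - (w * z).re := fun z hz => by
    have := Complex.re_le_norm (w * z)
    rw [norm_mul, hw1, hs z hz] at this
    linarith
  have hsum : (s.map fun z => 1 - (w * z).re).sum = 0 := by
    have h2 : (s.map fun z => (w * z).re).sum = s.card := by
      have := congrArg Complex.re hwS
      have h4 : (s.map fun z => w * z).sum = w * s.sum := by
        rw [Multiset.sum_map_mul_left, Multiset.map_id']
      rw [← h4] at this
      have h3 : (s.map fun z => (w * z).re).sum = ((s.map fun z => w * z).sum).re := by
        have := (map_multiset_sum Complex.reAddGroupHom (s.map fun z => w * z))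
        rw [Multiset.map_map] at this
        exact this.symm
      rw [h3]; simpa using this
    rw [Multiset.sum_map_sub, h2]; simp
  refine ⟨w⁻¹, fun z hz => ?_⟩
  have h1 : 1 - (w * z).re ≤ 0 := by
    rw [← hsum]
    exact Multiset.single_le_sum (by simpa using hre) _ (Multiset.mem_map_of_mem _ hz)
  have h2 : (w * z).re = 1 := by linarith [hre z hz]
  have h3 : ‖w * z‖ = 1 := by rw [norm_mul, hw1, hs z hz, one_mul]
  have h4 : w * z = 1 := by
    have h5 := Complex.sq_norm (w * z)
    rw [h3, Complex.normSq_apply, h2] at h5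
    apply Complex.ext
    · simpa using h2
    · have : (w * z).im * (w * z).im = 0 := by linarith
      simpa using this
  exact eq_inv_of_mul_eq_one_right h4

open Polynomial in
/-- A matrix of finite order whose normalized trace is an algebraic integer is traceless or scalar. -/
theorem matrix_trace_dichotomy {d N : ℕ} (hN : 0 < N) (hd : 0 < d)
    (M : Matrix (Fin d) (Fin d) ℂ) (hM : M ^ N = 1)
    (hTr : IsIntegral ℤ (M.trace / d)) :
    M.trace = 0 ∨ ∃ μ : ℂ, M = μ • (1 : Matrix (Fin d) (Fin d) ℂ) := by
  have : Nonempty (Fin d) := ⟨⟨0, hd⟩⟩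
  set s := M.charpoly.roots with hs
  have hroot : ∀ z ∈ s, z ∈ spectrum ℂ M := fun z hz => by
    rw [Matrix.mem_spectrum_iff_isRoot_charpoly]
    exact Polynomial.isRoot_of_mem_roots hz
  have hpow : ∀ z ∈ spectrum ℂ M, z ^ N = 1 := fun z hz => by
    have := spectrum.pow_mem_pow M N hz
    rw [hM, spectrum.one_eq] at this
    exact this
  have hcard : s.card = d := by
    rw [hs, IsAlgClosed.card_roots_eq_natDegree, Matrix.charpoly_natDegree_eq_dim, Fintype.card_fin]
  have htr : M.trace = s.sum := Matrix.trace_eq_sum_roots_charpoly M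
  rw [htr] at hTr ⊢
  rcases avg_roots hN s (fun z hz => hpow z (hroot z hz)) (by rwa [hcard]) with h | h
  · exact Or.inl h
  right
  obtain ⟨μ, hμ⟩ := all_eq_of_norm_sum s
    (fun z hz => Complex.norm_eq_one_of_pow_eq_one (hpow z (hroot z hz)) hN.ne') h
  obtain ⟨z, hz⟩ := Multiset.card_pos_iff_exists_mem.1 (hcard ▸ hd)
  have hμN : μ ^ N = 1 := by rw [← hμ z hz]; exact hpow z (hroot z hz)
  have hμs : ∀ ν ∈ spectrum ℂ M, ν = μ := fun ν hν => by
    apply hμ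
    rw [Matrix.mem_spectrum_iff_isRoot_charpoly] at hν
    exact (Polynomial.mem_roots (Matrix.charpoly_monic M).ne_zero).2 hν
  have hdvd : (X - C μ) ∣ (X ^ N - 1 : ℂ[X]) := by
    rw [Polynomial.dvd_iff_isRoot]; simp [hμN]
  obtain ⟨r, hr⟩ := hdvd
  -- `μ` is a simple root of `X ^ N - 1`, so the cofactor does not vanish there
  have hrμ : r.eval μ ≠ 0 := by
    have h1 := congrArg (fun q : ℂ[X] => (derivative q).eval μ) hr
    simp at h1
    rw [← h1]
    have hμ0 : μ ≠ 0 := by rintro rfl; simp [hN.ne'] at hμN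
    have : (N : ℂ) ≠ 0 := by exact_mod_cast hN.ne'
    rw [Polynomial.derivative_X_pow]
    simpa using ⟨hN.ne', fun h => absurd h hμ0⟩
  have hunit : IsUnit (aeval M r) := by
    rw [← spectrum.zero_notMem_iff ℂ,
      spectrum.map_polynomial_aeval_of_nonempty M r (⟨z, hroot z hz⟩)]
    rintro ⟨ν, hν, h0⟩
    rw [hμs ν hν] at h0
    exact hrμ h0
  have hprod : (aeval M (X - C μ)) * aeval M r = 0 := by
    rw [← map_mul, ← hr]; simp [hM]
  rw [hunit.mul_left_eq_zero] at hprod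
  refine ⟨μ, ?_⟩
  simpa [sub_eq_zero, Algebra.algebraMap_eq_smul_one] using hprod

/-- The regular representation of a product of matrix algebras contains the `i`-th factor with
multiplicity `d i`. -/
theorem trace_mulLeft_pi {n : ℕ} (d : Fin n → ℕ)
    (a : ∀ i, Matrix (Fin (d i)) (Fin (d i)) ℂ) :
    LinearMap.trace ℂ _ (LinearMap.mulLeft ℂ a) = ∑ i, (d i : ℂ) * (a i).trace := by
  let b : Module.Basis (Σ i : Fin n, Fin (d i) × Fin (d i)) ℂ
      (∀ i, Matrix (Fin (d i)) (Fin (d i)) ℂ) :=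
    Pi.basis fun i => Matrix.stdBasis ℂ (Fin (d i)) (Fin (d i))
  rw [LinearMap.trace_eq_matrix_trace ℂ b, Matrix.trace]
  simp only [Matrix.diag_apply, LinearMap.toMatrix_apply]
  rw [Fintype.sum_sigma]
  refine Finset.sum_congr rfl fun i _ => ?_
  have key : ∀ jk : Fin (d i) × Fin (d i),
      b.repr (LinearMap.mulLeft ℂ a (b ⟨i, jk⟩)) ⟨i, jk⟩ = a i jk.1 jk.1 := by
    rintro ⟨j, k⟩
    simp only [b, Pi.basis_repr, Pi.basis_apply, LinearMap.mulLeft_apply, Pi.mul_apply,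
      Pi.single_eq_same]
    rw [Matrix.stdBasis_eq_single]
    change (Matrix.stdBasis ℂ (Fin (d i)) (Fin (d i))).repr (a i * Matrix.single j k 1) (j, k) = _
    simp [Matrix.stdBasis, Matrix.mul_apply, Matrix.single_apply]
  rw [Finset.sum_congr rfl fun jk _ => key jk, Fintype.sum_prod_type]
  simp [Matrix.trace, Finset.mul_sum]

open scoped Classical in
/-- Burnside: in a finite simple group the conjugacy class of a noncentral element does not have
prime power size. The proof evaluates the regular character at the element through the Wedderburn
decomposition of the complex group algebra. -/
theorem burnside_class {G : Type} [Group G] [Finite G] [IsSimpleGroup G] (g : G)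
    (hg : g ∉ Subgroup.center G) {q k : ℕ} (hq : q.Prime)
    (hC : Nat.card {x // IsConj g x} = q ^ k) : False := by
  have : Fintype G := Fintype.ofFinite G
  let A := MonoidAlgebra ℂ G
  obtain ⟨n, d, hd, ⟨e⟩⟩ := IsSemisimpleRing.exists_algEquiv_pi_matrix_of_isAlgClosed ℂ A
  let pr : ∀ i, A →ₐ[ℂ] Matrix (Fin (d i)) (Fin (d i)) ℂ := fun i =>
    (Pi.evalAlgHom ℂ _ i).comp e.toAlgHom
  have pr_surj : ∀ i, Function.Surjective (pr i) := fun i M => by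
    refine ⟨e.symm (Pi.single i M), ?_⟩
    simp [pr]
  let ρ : ∀ i, G →* Matrix (Fin (d i)) (Fin (d i)) ℂ := fun i =>
    (pr i : A →* _).comp (MonoidAlgebra.of ℂ G)
  have hρ : ∀ i h, pr i (MonoidAlgebra.of ℂ G h) = ρ i h := fun i h => rfl
  have hg1 : g ≠ 1 := by rintro rfl; exact hg (Subgroup.one_mem _)
  -- the character of the regular representation vanishes at `g`
  have hreg : ∑ i, (d i : ℂ) * (ρ i g).trace = 0 := by
    have h1 := trace_mulLeft_pi d (e (MonoidAlgebra.of ℂ G g))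
    have h2 : LinearMap.mulLeft ℂ (e (MonoidAlgebra.of ℂ G g)) =
        e.toLinearEquiv.conj (LinearMap.mulLeft ℂ (MonoidAlgebra.of ℂ G g)) := by
      ext x i : 2
      simp [LinearEquiv.conj_apply]
    rw [h2, LinearMap.trace_conj'] at h1
    have h3 : LinearMap.trace ℂ A (LinearMap.mulLeft ℂ (MonoidAlgebra.of ℂ G g)) = 0 := by
      rw [LinearMap.trace_eq_matrix_trace ℂ (MonoidAlgebra.basis G ℂ), Matrix.trace]
      refine Finset.sum_eq_zero fun h _ => ?_
      rw [Matrix.diag_apply, LinearMap.toMatrix_apply]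
      simp [MonoidAlgebra.basis, MonoidAlgebra.single_mul_single, hg1]
    rw [h3] at h1
    exact h1.symm
  have hcentral : ∀ z : A, (∀ h, Commute z (MonoidAlgebra.of ℂ G h)) →
      ∀ i, ∃ ω : ℂ, pr i z = ω • 1 := fun z hz i => by
    have hz' : ∀ a : A, Commute z a := fun a => by
      induction a using MonoidAlgebra.induction_on with
      | of g => exact hz g
      | add a b ha hb => exact ha.add_right hb
      | smul r a ha => exact ha.smul_right r
    have h1 : pr i z ∈ Set.range (Matrix.scalar (Fin (d i))) := by
      apply Matrix.mem_range_scalar_of_commute_single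
      intro j k _
      obtain ⟨a, ha⟩ := pr_surj i (Matrix.single j k 1)
      rw [← ha]
      exact ((hz' a).map (pr i)).symm
    obtain ⟨ω, hω⟩ := h1
    exact ⟨ω, by rw [← hω, Matrix.smul_one_eq_diagonal]; rfl⟩
  -- exactly one Wedderburn component is the trivial representation
  let s : A := ∑ h : G, MonoidAlgebra.of ℂ G h
  have hs1 : ∀ h, MonoidAlgebra.of ℂ G h * s = s := fun h => by
    simp only [s, Finset.mul_sum, ← map_mul]
    exact Fintype.sum_equiv (Equiv.mulLeft h) _ _ fun _ => rfl
  have hs2 : ∀ h, s * MonoidAlgebra.of ℂ G h = s := fun h => by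
    have h1 : s * MonoidAlgebra.of ℂ G h = ∑ x : G, MonoidAlgebra.of ℂ G (x * h) := by
      rw [Finset.sum_mul]
      exact Finset.sum_congr rfl fun x _ => (map_mul _ _ _).symm
    rw [h1]
    exact Fintype.sum_equiv (Equiv.mulRight h) _ _ fun _ => rfl
  let aug : A →ₐ[ℂ] ℂ := MonoidAlgebra.lift ℂ ℂ G 1
  have haug1 : ∀ h, aug (MonoidAlgebra.of ℂ G h) = 1 := fun h => MonoidAlgebra.lift_of 1 h
  have hs0 : s ≠ 0 := by
    intro h
    have h1 : aug s = 0 := by rw [h, map_zero]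
    simp only [s, map_sum, haug1, Finset.sum_const, nsmul_eq_mul, mul_one] at h1
    exact Fintype.card_ne_zero (Nat.cast_eq_zero.1 h1)
  obtain ⟨i₀, hi₀⟩ : ∃ i, pr i s ≠ 0 := by
    by_contra! hcon
    exact hs0 (e.injective (by rw [map_zero]; funext i; exact hcon i))
  have htriv₀ : ∀ h, ρ i₀ h = 1 := fun h => by
    obtain ⟨ω, hω⟩ := hcentral s (fun h => (hs2 h).trans (hs1 h).symm) i₀
    have h1 : ρ i₀ h * pr i₀ s = pr i₀ s := by rw [← hρ, ← map_mul, hs1]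
    rw [hω] at h1 hi₀
    have hω0 : ω ≠ 0 := by rintro rfl; simp at hi₀
    rw [mul_smul_comm, mul_one] at h1
    exact smul_right_injective _ hω0 h1
  have haug : ∀ i, (∀ h, ρ i h = 1) → ∀ a, pr i a = aug a • 1 := fun i hi a => by
    induction a using MonoidAlgebra.induction_on with
    | of g => rw [hρ, hi, haug1, one_smul]
    | add a b ha hb => rw [map_add, ha, hb, map_add, add_smul]
    | smul r a ha => rw [map_smul, ha, map_smul, smul_assoc]
  have huniq : ∀ i, (∀ h, ρ i h = 1) → i = i₀ := fun i hi => by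
    by_contra hne
    have hdi := hd i
    have hdi₀ := hd i₀
    let a : A := e.symm (Pi.single i 1)
    have h1 : pr i a = 1 := by simp [pr, a]
    have h2 : pr i₀ a = 0 := by simp [pr, a, Ne.symm hne]
    rw [haug i hi] at h1
    rw [haug i₀ htriv₀] at h2
    have : aug a = 0 := by
      rcases smul_eq_zero.1 h2 with h | h
      · exact h
      · exact absurd h one_ne_zero
    rw [this, zero_smul] at h1
    exact zero_ne_one h1
  have hd₀ : d i₀ = 1 := by
    have : Subsingleton (Fin (d i₀)) := ⟨fun j k => by
      by_contra hjk
      obtain ⟨a, ha⟩ := pr_surj i₀ (Matrix.single j k 1)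
      rw [haug i₀ htriv₀] at ha
      have := congrFun (congrFun ha j) k
      simp [hjk] at this⟩
    have h1 := Fintype.card_le_one_iff_subsingleton.2 this
    rw [Fintype.card_fin] at h1
    have := (hd i₀).out
    omega
  -- the class sum of `g` is central and integral
  let zI : MonoidAlgebra ℤ G := ∑ x : {x // IsConj g x}, MonoidAlgebra.of ℤ G x
  let z : A := ∑ x : {x // IsConj g x}, MonoidAlgebra.of ℂ G x
  have hzint : IsIntegral ℤ z := by
    have h1 : IsIntegral ℤ zI := IsIntegral.of_finite ℤ zI
    have h2 := h1.map (MonoidAlgebra.mapRingHom G (Int.castRingHom ℂ)).toIntAlgHom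
    have h3 : (MonoidAlgebra.mapRingHom G (Int.castRingHom ℂ)).toIntAlgHom zI = z := by
      simp [zI, z]
    rwa [h3] at h2
  have hzc : ∀ h, Commute z (MonoidAlgebra.of ℂ G h) := fun h => by
    change z * _ = _ * z
    let ε : {x // IsConj g x} ≃ {x // IsConj g x} :=
      { toFun := fun x => ⟨h⁻¹ * x.1 * h, x.2.trans (isConj_iff.2 ⟨h⁻¹, by simp⟩)⟩
        invFun := fun x => ⟨h * x.1 * h⁻¹, x.2.trans (isConj_iff.2 ⟨h, by simp⟩)⟩
        left_inv := fun x => by simp [mul_assoc]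
        right_inv := fun x => by simp [mul_assoc] }
    have e1 : z * MonoidAlgebra.of ℂ G h =
        ∑ x : {x // IsConj g x}, MonoidAlgebra.of ℂ G (x.1 * h) := by
      rw [Finset.sum_mul]
      exact Finset.sum_congr rfl fun x _ => (map_mul _ _ _).symm
    have e2 : MonoidAlgebra.of ℂ G h * z =
        ∑ x : {x // IsConj g x}, MonoidAlgebra.of ℂ G (h * x.1) := by
      rw [Finset.mul_sum]
      exact Finset.sum_congr rfl fun x _ => (map_mul _ _ _).symm
    rw [e1, e2]
    refine Fintype.sum_equiv ε _ _ fun x => ?_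
    change _ = MonoidAlgebra.of ℂ G (h * (h⁻¹ * x.1 * h))
    rw [mul_assoc, mul_inv_cancel_left]
  have hpow : ∀ i h, ρ i h ^ Nat.card G = 1 := fun i h => by
    rw [← map_pow, pow_card_eq_one', map_one]
  have htri : ∀ i, IsIntegral ℤ ((ρ i g).trace) := fun i => by
    have : Nonempty (Fin (d i)) := ⟨⟨0, Nat.pos_of_ne_zero (hd i).out⟩⟩
    rw [Matrix.trace_eq_sum_roots_charpoly]
    refine IsIntegral.multiset_sum fun x hx => ?_
    have h1 : x ∈ spectrum ℂ (ρ i g) := by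
      rw [Matrix.mem_spectrum_iff_isRoot_charpoly]
      exact Polynomial.isRoot_of_mem_roots hx
    have h2 := spectrum.pow_mem_pow _ (Nat.card G) h1
    rw [hpow, spectrum.one_eq] at h2
    refine IsIntegral.of_pow (Nat.card_pos (α := G)) ?_
    rw [Set.mem_singleton_iff.1 h2]
    exact isIntegral_one
  -- in a component of degree prime to `q`, the Bezout identity makes the normalized trace integral
  have hkey : ∀ i, i ≠ i₀ → (∃ m : ℕ, d i = q * m) ∨ (ρ i g).trace = 0 := fun i hi => by
    rw [or_iff_not_imp_left]
    intro hqd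
    have hcop : Nat.Coprime (d i) (q ^ k) := by
      refine Nat.Coprime.pow_right k (Nat.Coprime.symm ((Nat.Prime.coprime_iff_not_dvd hq).2 ?_))
      rintro ⟨m, hm⟩
      exact hqd ⟨m, hm⟩
    have hdi : 0 < d i := Nat.pos_of_ne_zero (hd i).out
    have : Nonempty (Fin (d i)) := ⟨⟨0, hdi⟩⟩
    have hdi' : (d i : ℂ) ≠ 0 := by exact_mod_cast hdi.ne'
    obtain ⟨ω, hω⟩ := hcentral z hzc i
    have hωi : IsIntegral ℤ ω := by
      have h1 := hzint.map ((pr i).restrictScalars ℤ)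
      have h2 : ((pr i).restrictScalars ℤ) z = algebraMap ℂ _ ω := by
        rw [AlgHom.restrictScalars_apply, hω, Algebra.algebraMap_eq_smul_one]
      rw [h2] at h1
      exact (isIntegral_algebraMap_iff (FaithfulSMul.algebraMap_injective _ _)).1 h1
    have htrz : (d i : ℂ) * ω = (q ^ k : ℕ) * (ρ i g).trace := by
      have h1 : (pr i z).trace = (q ^ k : ℕ) * (ρ i g).trace := by
        simp only [z, map_sum, Matrix.trace_sum]
        have : ∀ x : {x // IsConj g x}, (pr i (MonoidAlgebra.of ℂ G x)).trace = (ρ i g).trace := by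
          rintro ⟨x, hx⟩
          obtain ⟨c, rfl⟩ := isConj_iff.1 hx
          rw [hρ, map_mul, Matrix.trace_mul_comm, ← map_mul]
          simp
        rw [Finset.sum_congr rfl fun x _ => this x, Finset.sum_const, nsmul_eq_mul,
          Finset.card_univ, ← Nat.card_eq_fintype_card, hC]
      rw [← h1, hω]
      simp [mul_comm]
    have hTr : IsIntegral ℤ ((ρ i g).trace / d i) := by
      have hbez := Nat.isCoprime_iff_coprime.2 hcop
      obtain ⟨u, v, huv⟩ := hbez
      have h1 : (ρ i g).trace / d i = u * (ρ i g).trace + v * ω := by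
        have h2 : ((u * d i + v * (q ^ k : ℕ) : ℤ) : ℂ) = 1 := by rw [huv]; simp
        push_cast at h2 htrz
        field_simp
        linear_combination (-(ρ i g).trace) * h2 - v * htrz
      rw [h1]
      exact ((isIntegral_algebraMap (x := u)).mul (htri i)).add ((isIntegral_algebraMap (x := v)).mul hωi)
    rcases matrix_trace_dichotomy Nat.card_pos hdi _ (hpow i g) hTr with h | ⟨μ, hμ⟩
    · exact h
    exfalso
    -- a scalar `ρ i g` is central, and `ρ i` is faithful because `G` is simple
    have hker : (ρ i).toHomUnits.ker = ⊥ := by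
      rcases IsSimpleGroup.eq_bot_or_eq_top_of_normal (ρ i).toHomUnits.ker inferInstance with h | h
      · exact h
      · refine absurd (huniq i fun h' => ?_) hi
        have : h' ∈ (ρ i).toHomUnits.ker := h ▸ Subgroup.mem_top h'
        have := congrArg Units.val (MonoidHom.mem_ker.1 this)
        simpa using this
    apply hg
    rw [Subgroup.mem_center_iff]
    intro h
    apply (MonoidHom.ker_eq_bot_iff _).1 hker
    have hc : ρ i (h * g) = ρ i (g * h) := by
      rw [map_mul, map_mul, hμ, mul_smul_comm, smul_mul_assoc, mul_one, one_mul]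
    exact Units.ext (by simpa only [MonoidHom.coe_toHomUnits] using hc)
  -- hence `1` is `q` times an algebraic integer
  have hterm : ∀ i, i ≠ i₀ →
      ∃ w : ℂ, IsIntegral ℤ w ∧ (d i : ℂ) * (ρ i g).trace = q * w := fun i hi => by
    rcases hkey i hi with ⟨m, hm⟩ | h0
    · refine ⟨m * (ρ i g).trace, (isIntegral_algebraMap (R := ℤ) (x := (m : ℤ))).mul (htri i), ?_⟩
      have hm' : (d i : ℂ) = q * m := by exact_mod_cast hm
      rw [hm', mul_assoc]
    · exact ⟨0, isIntegral_zero, by rw [h0]; ring⟩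
  choose! w hw1 hw2 using hterm
  rw [← Finset.add_sum_erase _ _ (Finset.mem_univ i₀), htriv₀, Matrix.trace_one, Fintype.card_fin,
    hd₀, Finset.sum_congr rfl fun i hi => hw2 i (Finset.ne_of_mem_erase hi), ← Finset.mul_sum] at hreg
  have hW : IsIntegral ℤ (∑ i ∈ Finset.univ.erase i₀, w i) :=
    IsIntegral.sum _ fun i hi => hw1 i (Finset.ne_of_mem_erase hi)
  have hq0 : (q : ℂ) ≠ 0 := by exact_mod_cast hq.ne_zero
  have hWq : ∑ i ∈ Finset.univ.erase i₀, w i = algebraMap ℚ ℂ (-1 / q) := by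
    rw [map_div₀, map_neg, map_one, map_natCast]
    field_simp
    push_cast at hreg
    linear_combination hreg
  rw [hWq] at hW
  have hW' : IsIntegral ℤ (-1 / q : ℚ) :=
    (isIntegral_algebraMap_iff (algebraMap ℚ ℂ).injective).1 hW
  obtain ⟨y, hy⟩ := IsIntegrallyClosed.isIntegral_iff.1 hW'
  have hqQ : (q : ℚ) ≠ 0 := by exact_mod_cast hq.ne_zero
  have hy2 : (y * q : ℤ) = -1 := by
    have : (y : ℚ) * q = -1 := by
      change (y : ℚ) = _ at hy
      rw [hy]; field_simp
    exact_mod_cast this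
  have h1 : (q : ℤ) ∣ 1 := ⟨-y, by linarith⟩
  have h2 : q ∣ 1 := by exact_mod_cast h1
  exact hq.one_lt.ne' (Nat.dvd_one.1 h2)

/-- The size of a conjugacy class is the index of the centralizer. -/
theorem card_isConj_eq_index {G : Type} [Group G] [Finite G] (g : G) :
    Nat.card {x // IsConj g x} = (Subgroup.centralizer {g}).index := by
  have h1 := MulAction.index_stabilizer (ConjAct G) g
  have h2 : (MulAction.stabilizer (ConjAct G) g).index = (Subgroup.centralizer {g}).index := by
    rw [ConjAct.stabilizer_eq_centralizer]; rfl
  rw [← h2, h1, ← Nat.card_coe_set_eq]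
  refine Nat.card_congr (Equiv.subtypeEquivRight fun x => ?_)
  rw [ConjAct.mem_orbit_conjAct]
  exact ⟨IsConj.symm, IsConj.symm⟩

theorem isSolvable_of_normal {G : Type} [Group G] (N : Subgroup G) [N.Normal]
    (h1 : Group.IsSolvable N) (h2 : Group.IsSolvable (G ⧸ N)) : Group.IsSolvable G :=
  Group.isSolvable_of_ker_le_range N.subtype (QuotientGroup.mk' N) (by simp)

/-- Burnside: a finite group whose order has at most two prime divisors is solvable. -/
theorem burnside_solvable (p q : ℕ) (n : ℕ) : ∀ (G : Type) [Group G] [Finite G],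
    Nat.card G = n → (∀ r, r.Prime → r ∣ n → r = p ∨ r = q) → Group.IsSolvable G := by
  induction n using Nat.strong_induction_on with
  | _ n ih =>
  intro G _ _ hn hpq
  have hpos : 0 < Nat.card G := Nat.card_pos
  -- a proper nontrivial normal subgroup suffices
  have red : ∀ N : Subgroup G, N.Normal → N ≠ ⊥ → N ≠ ⊤ → Group.IsSolvable G := by
    intro N hN h1 h2
    have c1 := N.card_mul_index
    have c2 : 1 < Nat.card N := (Subgroup.one_lt_card_iff_ne_bot N).2 h1
    have c3 : N.index ≠ 1 := fun h => h2 (Subgroup.index_eq_one.1 h)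
    have c4 : 0 < N.index := Nat.pos_of_ne_zero fun h => by rw [h] at c1; omega
    refine isSolvable_of_normal N (ih (Nat.card N) ?_ N rfl fun r hr hd => hpq r hr ?_)
      (ih (N.index) ?_ (G ⧸ N) rfl fun r hr hd => hpq r hr ?_)
    · rw [← hn, ← c1]; exact lt_mul_of_one_lt_right (by omega) (by omega)
    · rw [← hn]; exact hd.trans N.card_subgroup_dvd_card
    · rw [← hn, ← c1]; exact lt_mul_of_one_lt_left c4 c2
    · rw [← hn]; exact hd.trans N.index_dvd_card
  rcases subsingleton_or_nontrivial G with hG | hG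
  · exact Group.isSolvable_of_comm fun a b => Subsingleton.elim _ _
  by_cases hcomm : ∀ a b : G, a * b = b * a
  · exact Group.isSolvable_of_comm hcomm
  by_cases hs : IsSimpleGroup G
  swap
  · rw [isSimpleGroup_iff] at hs
    push Not at hs
    obtain ⟨N, hN, h1, h2⟩ := hs hG
    exact red N hN h1 h2
  exfalso
  -- `g` is a nontrivial central element of a Sylow `r`-subgroup
  obtain ⟨r, hr, hrd⟩ := Nat.exists_prime_and_dvd (Finite.one_lt_card (α := G)).ne'
  have : Fact r.Prime := ⟨hr⟩
  obtain ⟨P⟩ : Nonempty (Sylow r G) := inferInstance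
  have hPnt : Nontrivial P := by
    rw [← Finite.one_lt_card_iff_nontrivial]
    exact Nat.one_lt_iff_ne_zero_and_ne_one.2 ⟨Nat.card_pos.ne', fun h =>
      hr.one_lt.ne' (Nat.dvd_one.1 (h ▸ P.dvd_card_of_dvd_card hrd))⟩
  have hcent := P.2.center_nontrivial
  obtain ⟨⟨g, hg⟩, hg1⟩ := exists_ne (1 : Subgroup.center P)
  have hg1' : (g : G) ≠ 1 := fun h => hg1 (Subtype.ext (Subtype.ext h))
  have hPc : (P : Subgroup G) ≤ Subgroup.centralizer {(g : G)} := fun x hx => by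
    rw [Subgroup.mem_centralizer_singleton_iff]
    exact congrArg Subtype.val (Subgroup.mem_center_iff.1 hg ⟨x, hx⟩)
  have hgc : (g : G) ∉ Subgroup.center G := fun h => by
    rcases (inferInstance : (Subgroup.center G).Normal).eq_bot_or_eq_top with h' | h'
    · exact hg1' (Subgroup.mem_bot.1 (h' ▸ h))
    · exact hcomm fun a b => (Subgroup.mem_center_iff.1 (h' ▸ Subgroup.mem_top a) b).symm
  have hidx : (Subgroup.centralizer {(g : G)}).index ∣ (P : Subgroup G).index :=
    Subgroup.index_dvd_of_le hPc
  have hidx0 : (Subgroup.centralizer {(g : G)}).index ≠ 0 := Subgroup.FiniteIndex.index_ne_zero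
  have hr' : ∀ s, s.Prime → s ∣ (Subgroup.centralizer {(g : G)}).index →
      (s = p ∨ s = q) ∧ s ≠ r := fun s hs hd =>
    ⟨hpq s hs (hn ▸ hd.trans (Subgroup.index_dvd_card _)), by
      rintro rfl; exact P.not_dvd_index (hd.trans hidx)⟩
  by_cases h1 : (Subgroup.centralizer {(g : G)}).index = 1
  · refine burnside_class (g : G) hgc hr (k := 0) ?_
    rw [card_isConj_eq_index, h1, pow_zero]
  obtain ⟨s, hs, hsd⟩ := Nat.exists_prime_and_dvd h1
  have hpow := Nat.eq_prime_pow_of_unique_prime_dvd (p := s) hidx0 fun {d} hd hdd => by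
    have a1 := hpq r hr (hn ▸ hrd)
    have a2 := hr' s hs hsd
    have a3 := hr' d hd hdd
    omega
  exact burnside_class (g : G) hgc hs ((card_isConj_eq_index _).trans hpow)

/-- A nontrivial finite solvable group has a nontrivial normal `p`-subgroup for some prime `p`:
the `p`-torsion of the last nontrivial term of the derived series. -/
theorem exists_normal_pgroup (G : Type) [Group G] [Finite G] [Nontrivial G]
    (hG : Group.IsSolvable G) :
    ∃ p : ℕ, p.Prime ∧ ∃ N : Subgroup G, N.Normal ∧ N ≠ ⊥ ∧ IsPGroup p N := by
  classical
  have hex : ∃ n, derivedSeries G n = ⊥ := hG.solvable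
  obtain ⟨m, hm⟩ : ∃ m, Nat.find hex = m + 1 := by
    refine Nat.exists_eq_succ_of_ne_zero fun h => ?_
    have h1 := Nat.find_spec hex
    rw [h, derivedSeries_zero] at h1
    exact top_ne_bot h1
  have hD0 : derivedSeries G m ≠ ⊥ := Nat.find_min hex (by omega)
  have hD1 : ⁅derivedSeries G m, derivedSeries G m⁆ = ⊥ := by
    rw [← derivedSeries_succ, ← hm]; exact Nat.find_spec hex
  set D := derivedSeries G m with hD
  have hDn : D.Normal := derivedSeries_normal G m
  have hcomm : ∀ a ∈ D, ∀ b ∈ D, a * b = b * a := fun a ha b hb => by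
    have := Subgroup.commutator_mem_commutator ha hb
    rw [hD1, Subgroup.mem_bot, commutatorElement_eq_one_iff_mul_comm] at this
    exact this
  obtain ⟨p, hp, hpd⟩ := Nat.exists_prime_and_dvd ((Subgroup.one_lt_card_iff_ne_bot D).2 hD0).ne'
  have : Fact p.Prime := ⟨hp⟩
  refine ⟨p, hp, { carrier := {x | x ∈ D ∧ x ^ p = 1}
                   mul_mem' := fun {a b} ha hb => ⟨D.mul_mem ha.1 hb.1, ?_⟩
                   one_mem' := ⟨D.one_mem, one_pow _⟩
                   inv_mem' := fun {a} ha => ⟨D.inv_mem ha.1, by rw [inv_pow, ha.2, inv_one]⟩ },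
    ⟨fun a ha g => ⟨hDn.conj_mem a ha.1 g, ?_⟩⟩, ?_, ?_⟩
  · rw [Commute.mul_pow (hcomm a ha.1 b hb.1), ha.2, hb.2, one_mul]
  · rw [conj_pow, ha.2]; simp
  · obtain ⟨x, hx⟩ := exists_prime_orderOf_dvd_card' p hpd
    intro h
    have h1 : (x : G) ∈ (⊥ : Subgroup G) := by
      rw [← h]
      refine ⟨x.2, ?_⟩
      rw [← hx, ← Subgroup.orderOf_coe, pow_orderOf_eq_one]
    rw [Subgroup.mem_bot] at h1
    have h2 : x = 1 := Subtype.ext h1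
    rw [h2, orderOf_one] at hx
    exact hp.one_lt.ne hx
  · intro x
    exact ⟨1, by rw [pow_one]; exact Subtype.ext x.2.2⟩

/-! ### Wielandt's theorem -/

/-- Subgroups of coprime indices factorize the group. -/
theorem exists_mul_of_coprime_index {G : Type} [Group G] [Finite G] (H K : Subgroup G)
    (h : Nat.Coprime H.index K.index) (g : G) : ∃ a ∈ H, ∃ b ∈ K, g = a * b := by
  let x : G ⧸ K := ((1 : G) : G ⧸ K)
  have h1 : (MulAction.stabilizer H x) = K.subgroupOf H := by
    ext a
    rw [MulAction.mem_stabilizer_iff, Subgroup.mem_subgroupOf]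
    change (((a : G) * 1 : G) : G ⧸ K) = ((1 : G) : G ⧸ K) ↔ _
    rw [QuotientGroup.eq]
    simp
  have h2 := MulAction.index_stabilizer H x
  rw [h1] at h2
  change K.relIndex H = _ at h2
  have h3 : H.relIndex K * K.index = K.relIndex H * H.index := by
    rw [← Subgroup.inf_relIndex_right H K, ← Subgroup.inf_relIndex_right K H,
      Subgroup.relIndex_mul_index inf_le_right, Subgroup.relIndex_mul_index inf_le_right, inf_comm]
  have h4 : K.index ∣ K.relIndex H :=
    h.symm.dvd_of_dvd_mul_right (h3 ▸ Dvd.intro_left _ rfl)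
  have h5 : K.relIndex H ≠ 0 := Subgroup.FiniteIndex.index_ne_zero
  have h6 : (Set.univ : Set (G ⧸ K)).ncard ≤ (MulAction.orbit H x).ncard := by
    rw [← h2, Set.ncard_univ]
    exact Nat.le_of_dvd (Nat.pos_of_ne_zero h5) h4
  have h7 : MulAction.orbit H x = Set.univ :=
    Set.eq_of_subset_of_ncard_le (Set.subset_univ _) h6
  obtain ⟨a, ha⟩ : ((g : G) : G ⧸ K) ∈ MulAction.orbit H x := h7 ▸ Set.mem_univ _
  change (((a : G) * 1 : G) : G ⧸ K) = _ at ha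
  rw [QuotientGroup.eq, mul_one] at ha
  exact ⟨a, a.2, (a : G)⁻¹ * g, ha, by group⟩

/-- Wielandt: a finite group having three solvable subgroups of pairwise coprime indices is
solvable. -/
theorem wielandt_solvable (n : ℕ) : ∀ (G : Type) [Group G] [Finite G], Nat.card G = n →
    ∀ H₁ H₂ H₃ : Subgroup G, Group.IsSolvable H₁ → Group.IsSolvable H₂ → Group.IsSolvable H₃ →
    Nat.Coprime H₁.index H₂.index → Nat.Coprime H₁.index H₃.index →
    Nat.Coprime H₂.index H₃.index → Group.IsSolvable G := by
  induction n using Nat.strong_induction_on with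
  | _ n ih =>
  intro G _ _ hn H₁ H₂ H₃ s₁ s₂ s₃ c₁₂ c₁₃ c₂₃
  rcases subsingleton_or_nontrivial H₁ with hH | hH
  · have h1 : H₁ = ⊥ := (Subgroup.eq_bot_iff_card _).2 (Finite.card_le_one_iff_subsingleton.2 hH |>.antisymm Nat.card_pos)
    rw [h1, Subgroup.index_bot] at c₁₂
    have h2 := Nat.eq_one_of_dvd_coprimes c₁₂ H₂.index_dvd_card dvd_rfl
    rw [Subgroup.index_eq_one] at h2
    have : Group.IsSolvable (⊤ : Subgroup G) := h2 ▸ s₂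
    exact Group.isSolvable_of_surjective (f := (⊤ : Subgroup G).subtype) fun g => ⟨⟨g, trivial⟩, rfl⟩
  obtain ⟨p, hp, N, hN, hN0, hNp⟩ := exists_normal_pgroup H₁ s₁
  have : Fact p.Prime := ⟨hp⟩
  let N' : Subgroup G := N.map H₁.subtype
  have hN'p : IsPGroup p N' := hNp.map _
  have hN'n : ∀ x ∈ N', ∀ h ∈ H₁, h * x * h⁻¹ ∈ N' := by
    rintro _ ⟨x, hx, rfl⟩ h hh
    exact ⟨⟨h, hh⟩ * x * ⟨h, hh⟩⁻¹, hN.conj_mem x hx _, rfl⟩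
  -- a fixed point of `N'` on `G ⧸ K` gives a conjugate of `N'` inside `K`
  have key : ∀ K : Subgroup G, Group.IsSolvable K → Nat.Coprime H₁.index K.index →
      ¬ p ∣ K.index → Group.IsSolvable G := by
    intro K sK hcop hpK
    obtain ⟨y, hy⟩ := hN'p.nonempty_fixed_point_of_prime_not_dvd_card (G ⧸ K) hpK
    obtain ⟨g, rfl⟩ := QuotientGroup.mk_surjective y
    have hg : ∀ x ∈ N', g⁻¹ * x * g ∈ K := fun x hx => by
      have h1 : ((x * g : G) : G ⧸ K) = (g : G ⧸ K) := hy ⟨x, hx⟩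
      rw [eq_comm, QuotientGroup.eq] at h1
      rwa [mul_assoc]
    have hNK : ∀ x ∈ N', x ∈ K := by
      intro x hx
      obtain ⟨a, ha, b, hb, rfl⟩ := exists_mul_of_coprime_index H₁ K hcop g
      have h1 := K.mul_mem (K.mul_mem hb (hg _ (hN'n x hx a ha))) (K.inv_mem hb)
      convert h1 using 1
      group
    have hall : ∀ u : G, ∀ x ∈ N', u * x * u⁻¹ ∈ K := by
      intro u x hx
      obtain ⟨a, ha, b, hb, hab⟩ := exists_mul_of_coprime_index H₁ K hcop u⁻¹
      have h1 := K.mul_mem (K.mul_mem (K.inv_mem hb)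
        (hNK _ (hN'n x hx a⁻¹ (H₁.inv_mem ha)))) hb
      have hu : u = b⁻¹ * a⁻¹ := by rw [← mul_inv_rev, ← hab, inv_inv]
      rw [hu]
      convert h1 using 1
      group
    let M := Subgroup.normalClosure (N' : Set G)
    have hMK : M ≤ K := by
      refine (Subgroup.closure_le _).2 ?_
      intro z hz
      obtain ⟨x, hx, hxz⟩ := Group.mem_conjugatesOfSet_iff.1 hz
      obtain ⟨u, rfl⟩ := isConj_iff.1 hxz
      exact hall u x hx
    have hM0 : M ≠ ⊥ := fun h => hN0 <| by
      have h1 : N' ≤ ⊥ := h ▸ Subgroup.subset_normalClosure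
      rw [le_bot_iff, Subgroup.map_eq_bot_iff_of_injective _ H₁.subtype_injective] at h1
      exact h1
    have sM : Group.IsSolvable M :=
      Group.isSolvable_of_isSolvable_injective (Subgroup.inclusion_injective hMK)
    have hlt : Nat.card (G ⧸ M) < n := by
      have c1 := M.card_mul_index
      have c2 : 1 < Nat.card M := (Subgroup.one_lt_card_iff_ne_bot M).2 hM0
      have c4 : 0 < M.index := Nat.pos_of_ne_zero Subgroup.FiniteIndex.index_ne_zero
      change M.index < n
      rw [← hn, ← c1]; exact lt_mul_of_one_lt_left c4 c2
    have hs : ∀ H : Subgroup G, Group.IsSolvable H →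
        Group.IsSolvable (H.map (QuotientGroup.mk' M)) := fun H hH =>
      Group.isSolvable_of_surjective ((QuotientGroup.mk' M).subgroupMap_surjective H)
    have hd : ∀ H : Subgroup G, (H.map (QuotientGroup.mk' M)).index ∣ H.index := fun H =>
      Subgroup.index_map_dvd H (QuotientGroup.mk'_surjective M)
    refine isSolvable_of_normal M sM (ih _ hlt (G ⧸ M) rfl _ _ _ (hs H₁ s₁) (hs H₂ s₂) (hs H₃ s₃)
      ?_ ?_ ?_)
    · exact Nat.Coprime.of_dvd (hd _) (hd _) c₁₂
    · exact Nat.Coprime.of_dvd (hd _) (hd _) c₁₃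
    · exact Nat.Coprime.of_dvd (hd _) (hd _) c₂₃
  by_cases h2 : p ∣ H₂.index
  · exact key H₃ s₃ c₁₃ fun h3 => hp.one_lt.ne' (Nat.eq_one_of_dvd_coprimes c₂₃ h2 h3)
  · exact key H₂ s₂ c₁₂ h2

/-! ### Braces and their solvability -/

/-- A left brace, presented by its multiplicative group `G`, its additive group `A`, the action `φ`
of `G` on `A` (the lambda map up to inversion), and the identification `c` of the two underlying
sets; `c` is the inverse of a bijective 1-cocycle. Endomorphisms suffice for `φ`, since a group can
act only by automorphisms. -/
structure BraceData (G A : Type) [Group G] [AddCommGroup A] where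
  φ : G →* AddMonoid.End A
  c : A → G
  bij : Function.Bijective c
  coc : ∀ a b, c (a + b) = c (φ (c b) a) * c b

namespace BraceData

variable {G A : Type} [Group G] [AddCommGroup A] (D : BraceData G A)

theorem φ_mul (g h : G) (a : A) : D.φ (g * h) a = D.φ g (D.φ h a) := by
  rw [map_mul]; rfl

theorem φ_one (a : A) : D.φ 1 a = a := by
  rw [map_one]; rfl

theorem φ_inv_self (g : G) (a : A) : D.φ g⁻¹ (D.φ g a) = a := by
  rw [← φ_mul, inv_mul_cancel, φ_one]

theorem φ_self_inv (g : G) (a : A) : D.φ g (D.φ g⁻¹ a) = a := by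
  rw [← φ_mul, mul_inv_cancel, φ_one]

theorem φ_inj (g : G) : Function.Injective (D.φ g) := fun a b h => by
  rw [← D.φ_inv_self g a, h, φ_inv_self]

theorem c_zero : D.c 0 = 1 := by
  have h := D.coc 0 0
  rw [add_zero, map_zero] at h
  exact left_eq_mul.1 h

theorem c_mul (a b : A) : D.c a * D.c b = D.c (D.φ (D.c b)⁻¹ a + b) := by
  rw [D.coc, φ_self_inv]

theorem card_eq (D : BraceData G A) : Nat.card A = Nat.card G := Nat.card_congr (Equiv.ofBijective _ D.bij)

theorem finite_left [Finite G] (D : BraceData G A) : Finite A := Finite.of_injective _ D.bij.1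

/-- The stabilizer of `t` in the multiplicative group. -/
def stab (t : A) : Subgroup G where
  carrier := {g | D.φ g t = t}
  mul_mem' {a b} ha hb := by
    change D.φ (a * b) t = t
    rw [φ_mul, show D.φ b t = t from hb]; exact ha
  one_mem' := D.φ_one t
  inv_mem' {a} ha := by
    change D.φ a⁻¹ t = t
    have ha' : D.φ a t = t := ha
    nth_rw 1 [← ha']
    exact D.φ_inv_self a t

theorem mem_stab {t : A} {g : G} : g ∈ D.stab t ↔ D.φ g t = t := Iff.rfl

/-- An additive subgroup closed under `(a, b) ↦ φ (c b) a` is a subbrace. -/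
def IsSub (B : AddSubgroup A) : Prop := ∀ a ∈ B, ∀ b ∈ B, D.φ (D.c b) a ∈ B

variable {D}

theorem IsSub.inv [Finite G] {B : AddSubgroup A} (hB : D.IsSub B) {a b : A} (ha : a ∈ B)
    (hb : b ∈ B) : D.φ (D.c b)⁻¹ a ∈ B := by
  have := D.finite_left
  let f : B → B := fun x => ⟨D.φ (D.c b) x, hB x x.2 b hb⟩
  have hf : Function.Injective f := fun x y h =>
    Subtype.ext (D.φ_inj _ (congrArg Subtype.val h))
  obtain ⟨x, hx⟩ := Finite.surjective_of_injective hf ⟨a, ha⟩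
  have h1 : D.φ (D.c b) x = a := congrArg Subtype.val hx
  rw [← h1, φ_inv_self]
  exact x.2

/-- The multiplicative group of a subbrace. -/
def IsSub.H [Finite G] {B : AddSubgroup A} (hB : D.IsSub B) : Subgroup G where
  carrier := D.c '' B
  mul_mem' := by
    rintro _ _ ⟨a, ha, rfl⟩ ⟨b, hb, rfl⟩
    exact ⟨_, B.add_mem (hB.inv ha hb) hb, (D.c_mul a b).symm⟩
  one_mem' := ⟨0, B.zero_mem, D.c_zero⟩
  inv_mem' := by
    rintro _ ⟨b, hb, rfl⟩
    refine ⟨D.φ (D.c b) (-b), hB _ (B.neg_mem hb) b hb, ?_⟩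
    rw [eq_inv_iff_mul_eq_one, c_mul, φ_inv_self, neg_add_cancel, c_zero]

theorem IsSub.mem_H [Finite G] {B : AddSubgroup A} (hB : D.IsSub B) {g : G} :
    g ∈ hB.H ↔ ∃ a ∈ B, D.c a = g := Iff.rfl

theorem IsSub.c_mem [Finite G] {B : AddSubgroup A} (hB : D.IsSub B) {a : A} :
    D.c a ∈ hB.H ↔ a ∈ B :=
  ⟨fun ⟨b, hb, h⟩ => D.bij.1 h ▸ hb, fun h => ⟨a, h, rfl⟩⟩

theorem IsSub.φ_mem [Finite G] {B : AddSubgroup A} (hB : D.IsSub B) {g : G} (hg : g ∈ hB.H)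
    {a : A} (ha : a ∈ B) : D.φ g a ∈ B := by
  obtain ⟨b, hb, rfl⟩ := hg
  exact hB a ha b hb

/-- The brace structure of a subbrace. -/
def IsSub.data [Finite G] {B : AddSubgroup A} (hB : D.IsSub B) : BraceData hB.H B where
  φ :=
    { toFun := fun g =>
        { toFun := fun a => ⟨D.φ g a, hB.φ_mem g.2 a.2⟩
          map_zero' := Subtype.ext (map_zero _)
          map_add' := fun a b => Subtype.ext (map_add _ _ _) }
      map_one' := AddMonoidHom.ext fun a => Subtype.ext (D.φ_one a)
      map_mul' := fun g h => AddMonoidHom.ext fun a => Subtype.ext (D.φ_mul g h a) }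
  c := fun a => ⟨D.c a, hB.c_mem.2 a.2⟩
  bij := ⟨fun a b h => Subtype.ext (D.bij.1 (congrArg Subtype.val h)), fun g => by
    obtain ⟨a, ha, h⟩ := g.2
    exact ⟨⟨a, ha⟩, Subtype.ext h⟩⟩
  coc := fun a b => Subtype.ext (D.coc a b)

/-- The `k`-torsion of an abelian group. -/
def tor (A : Type) [AddCommGroup A] (k : ℕ) : AddSubgroup A where
  carrier := {a | k • a = 0}
  add_mem' {a b} ha hb := by
    change k • (a + b) = 0
    rw [nsmul_add, show k • a = 0 from ha, show k • b = 0 from hb, add_zero]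
  zero_mem' := nsmul_zero k
  neg_mem' {a} ha := by
    change k • (-a) = 0
    rw [smul_neg, show k • a = 0 from ha, neg_zero]

theorem mem_tor {k : ℕ} {a : A} : a ∈ tor A k ↔ k • a = 0 := Iff.rfl

theorem φ_mem_tor (g : G) {k : ℕ} {a : A} (ha : a ∈ tor A k) : D.φ g a ∈ tor A k := by
  rw [mem_tor] at *
  rw [← map_nsmul, ha, map_zero]

theorem isSub_tor (D : BraceData G A) (k : ℕ) : D.IsSub (tor A k) := fun _ ha _ _ => φ_mem_tor _ ha

/-- For coprime `k`, `m` some multiplier projects an abelian group of exponent dividing `k * m`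
onto its `m`-torsion along its `k`-torsion. -/
theorem exists_projector {k m : ℕ} (hkm : Nat.Coprime k m) (hA : ∀ a : A, (k * m) • a = 0) :
    ∃ u v : ℕ, (∀ a : A, u • a ∈ tor A m) ∧ (∀ a : A, v • a ∈ tor A k) ∧
      (∀ a ∈ tor A m, u • a = a) ∧ ∀ a : A, u • a + v • a = a := by
  obtain ⟨u, hu0, hu1⟩ := Nat.chineseRemainder hkm 0 1
  obtain ⟨v, hv1, hv0⟩ := Nat.chineseRemainder hkm 1 0
  have hmod : ∀ (r x y : ℕ) (a : A), r • a = 0 → x ≡ y [MOD r] → x • a = y • a := by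
    intro r x y a ha hxy
    have h1 : ∀ z : ℕ, z • a = (z % r) • a := fun z => by
      conv_lhs => rw [← Nat.div_add_mod z r, add_nsmul, mul_comm, mul_nsmul', ha, nsmul_zero, zero_add]
    rw [h1 x, h1 y, hxy]
  refine ⟨u, v, fun a => ?_, fun a => ?_, fun a ha => ?_, fun a => ?_⟩
  · obtain ⟨w, rfl⟩ := (Nat.modEq_zero_iff_dvd).1 hu0
    rw [mem_tor, ← mul_nsmul', show m * (k * w) = w * (k * m) by ring, mul_nsmul', hA, nsmul_zero]
  · obtain ⟨w, rfl⟩ := (Nat.modEq_zero_iff_dvd).1 hv0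
    rw [mem_tor, ← mul_nsmul', show k * (m * w) = w * (k * m) by ring, mul_nsmul', hA, nsmul_zero]
  · rw [hmod m u 1 a ha hu1, one_nsmul]
  · rw [← add_nsmul, hmod (k * m) (u + v) 1 a (hA a), one_nsmul]
    exact (Nat.modEq_and_modEq_iff_modEq_mul hkm).1
      ⟨by simpa using hu0.add hv1, by simpa using hu1.add hv0⟩

theorem tor_inf {k m : ℕ} (hkm : Nat.Coprime k m) {a : A} (hk : a ∈ tor A k) (hm : a ∈ tor A m) :
    a = 0 := by
  have h1 := Nat.dvd_gcd (addOrderOf_dvd_iff_nsmul_eq_zero.2 hk)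
    (addOrderOf_dvd_iff_nsmul_eq_zero.2 hm)
  rw [hkm.gcd_eq_one, Nat.dvd_one, AddMonoid.addOrderOf_eq_one_iff] at h1
  exact h1

theorem card_tor [Finite A] {k m : ℕ} (hkm : Nat.Coprime k m) (hA : Nat.card A = k * m) :
    Nat.card (tor A k) = k := by
  have hA' : ∀ a : A, (k * m) • a = 0 := fun a => hA ▸ card_nsmul_eq_zero'
  obtain ⟨u, v, hu, hv, -, huv⟩ := exists_projector hkm hA'
  have hprod : Nat.card (tor A k) * Nat.card (tor A m) = k * m := by
    rw [← hA, ← Nat.card_prod]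
    refine Nat.card_congr (Equiv.ofBijective (fun x => (x.1 : A) + x.2) ⟨?_, fun a => ?_⟩)
    · rintro ⟨x, y⟩ ⟨x', y'⟩ h
      have h' : (x : A) + y = x' + y' := h
      have h1 : (x : A) - x' = y' - y := by
        rw [sub_eq_sub_iff_add_eq_add, h', add_comm]
      have h2 := tor_inf hkm ((tor A k).sub_mem x.2 x'.2) (h1 ▸ (tor A m).sub_mem y'.2 y.2)
      have h3 : (x : A) = x' := sub_eq_zero.1 h2
      rw [h3] at h'
      exact Prod.ext (Subtype.ext h3) (Subtype.ext (add_left_cancel h'))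
    · exact ⟨(⟨v • a, hv a⟩, ⟨u • a, hu a⟩), by change v • a + u • a = a; rw [add_comm, huv]⟩
  have hco : ∀ k m : ℕ, Nat.Coprime k m → Nat.Coprime (Nat.card (tor A k)) m := by
    intro k m hkm
    by_contra hcon
    obtain ⟨r, hr, h1, h2⟩ := Nat.Prime.not_coprime_iff_dvd.1 hcon
    have : Fact r.Prime := ⟨hr⟩
    obtain ⟨x, hx⟩ := exists_prime_addOrderOf_dvd_card' r h1
    have h3 : r ∣ k := by
      rw [← hx, addOrderOf_dvd_iff_nsmul_eq_zero]
      exact Subtype.ext x.2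
    exact hr.one_lt.ne' (Nat.eq_one_of_dvd_coprimes hkm h3 h2)
  refine Nat.dvd_antisymm ((hco k m hkm).dvd_of_dvd_mul_right (hprod ▸ Dvd.intro _ rfl)) ?_
  exact ((hco m k hkm.symm).symm).dvd_of_dvd_mul_right (hprod ▸ Dvd.intro _ rfl)

theorem IsSub.card_H [Finite G] {B : AddSubgroup A} (hB : D.IsSub B) :
    Nat.card hB.H = Nat.card B := hB.data.card_eq.symm

/-- The Hall subgroup of order `k`, attached to the `k`-torsion of the additive group. -/
abbrev hall [Finite G] (D : BraceData G A) (k : ℕ) : Subgroup G := (D.isSub_tor k).H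

theorem card_hall [Finite G] {k m : ℕ} (hkm : Nat.Coprime k m) (hG : Nat.card G = k * m) :
    Nat.card (D.hall k) = k := by
  have := D.finite_left
  rw [IsSub.card_H]
  exact card_tor hkm (D.card_eq.trans hG)

theorem index_hall [Finite G] {k m : ℕ} (hkm : Nat.Coprime k m) (hG : Nat.card G = k * m) :
    (D.hall k).index = m := by
  have h1 := (D.hall k).card_mul_index
  rw [card_hall hkm hG, hG] at h1
  have h0 : k ≠ 0 := by
    rintro rfl
    have := Nat.card_pos (α := G)
    omega
  exact Nat.eq_of_mul_eq_mul_left (Nat.pos_of_ne_zero h0) h1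

/-- The multiplicative group of a finite brace is solvable: it has Hall `p`-complements for all `p`,
namely the torsion subbraces, so with three prime divisors Wielandt's theorem applies inductively and
with at most two Burnside's theorem does. -/
theorem solvable (n : ℕ) : ∀ (G A : Type) [Group G] [AddCommGroup A] [Finite G],
    BraceData G A → Nat.card G = n → Group.IsSolvable G := by
  induction n using Nat.strong_induction_on with
  | _ n ih =>
  intro G A _ _ _ D hn
  have hn0 : n ≠ 0 := hn ▸ Nat.card_pos.ne'
  -- the Hall `p`-complement is solvable
  have key : ∀ p, p.Prime → p ∣ n → ∃ (H : Subgroup G) (e : ℕ), Group.IsSolvable H ∧ H.index = p ^ e := by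
    intro p hp hpn
    obtain ⟨e, m, hpm, hem⟩ := Nat.exists_eq_pow_mul_and_not_dvd hn0 p hp.ne_one
    have hcop : Nat.Coprime m (p ^ e) :=
      Nat.Coprime.pow_right e (((Nat.Prime.coprime_iff_not_dvd hp).2 hpm).symm)
    have hG : Nat.card G = m * p ^ e := by rw [hn, hem, mul_comm]
    have hlt : m < n := by
      have he : e ≠ 0 := by
        rintro rfl
        rw [pow_zero, one_mul] at hem
        exact hpm (hem ▸ hpn)
      have h1 : 1 < p ^ e := Nat.one_lt_pow he hp.one_lt
      have h2 : 0 < m := Nat.pos_of_ne_zero (by rintro rfl; simp at hpm)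
      rw [hem]; exact lt_mul_of_one_lt_left h2 h1
    exact ⟨D.hall m, e, ih m hlt _ _ (D.isSub_tor m).data (card_hall hcop hG), index_hall hcop hG⟩
  by_cases h2 : ∃ p q, ∀ r, r.Prime → r ∣ n → r = p ∨ r = q
  · obtain ⟨p, q, hpq⟩ := h2
    exact burnside_solvable p q n G hn hpq
  push Not at h2
  obtain ⟨p, hp, hpn, -, -⟩ := h2 1 1
  obtain ⟨q, hq, hqn, hqp, -⟩ := h2 p p
  obtain ⟨r, hr, hrn, hrp, hrq⟩ := h2 p q
  obtain ⟨H₁, e₁, s₁, i₁⟩ := key p hp hpn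
  obtain ⟨H₂, e₂, s₂, i₂⟩ := key q hq hqn
  obtain ⟨H₃, e₃, s₃, i₃⟩ := key r hr hrn
  refine wielandt_solvable n G hn H₁ H₂ H₃ s₁ s₂ s₃ ?_ ?_ ?_
  · rw [i₁, i₂]; exact Nat.coprime_pow_primes _ _ hp hq hqp.symm
  · rw [i₁, i₃]; exact Nat.coprime_pow_primes _ _ hp hr hrp.symm
  · rw [i₂, i₃]; exact Nat.coprime_pow_primes _ _ hq hr hrq.symm

end BraceData

/-! ### Subgroups of squarefree index -/

theorem relIndex_sup_of_normal {G : Type} [Group G] [Finite G] (N S : Subgroup G) [N.Normal] :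
    S.relIndex (N ⊔ S) = S.relIndex N := by
  have h1 := Subgroup.relIndex_mul_relIndex (N ⊓ S) N (N ⊔ S) inf_le_left le_sup_left
  have h2 := Subgroup.relIndex_mul_relIndex (N ⊓ S) S (N ⊔ S) inf_le_right le_sup_right
  rw [Subgroup.relIndex_sup_left, inf_comm, Subgroup.inf_relIndex_right] at h1
  rw [Subgroup.inf_relIndex_right] at h2
  have h3 : N.relIndex S ≠ 0 := Subgroup.FiniteIndex.index_ne_zero
  rw [inf_comm S N, ← h2, mul_comm] at h1
  exact (Nat.eq_of_mul_eq_mul_left (Nat.pos_of_ne_zero h3) h1).symm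

theorem relIndex_eq_index_of_mul {G : Type} [Group G] [Finite G] (H K : Subgroup G)
    (h : ∀ g, ∃ a ∈ H, ∃ b ∈ K, g = a * b) : K.relIndex H = K.index := by
  let x : G ⧸ K := ((1 : G) : G ⧸ K)
  have h1 : (MulAction.stabilizer H x) = K.subgroupOf H := by
    ext a
    rw [MulAction.mem_stabilizer_iff, Subgroup.mem_subgroupOf]
    change (((a : G) * 1 : G) : G ⧸ K) = ((1 : G) : G ⧸ K) ↔ _
    rw [QuotientGroup.eq]
    simp
  have h2 := MulAction.index_stabilizer H x
  rw [h1] at h2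
  change K.relIndex H = _ at h2
  have h3 : MulAction.orbit H x = Set.univ := by
    refine Set.eq_univ_of_forall fun y => ?_
    obtain ⟨g, rfl⟩ := QuotientGroup.mk_surjective y
    obtain ⟨a, ha, b, hb, rfl⟩ := h g
    refine ⟨⟨a, ha⟩, ?_⟩
    change ((a * 1 : G) : G ⧸ K) = ((a * b : G) : G ⧸ K)
    rw [QuotientGroup.eq]
    simpa using hb
  rw [h2, h3, Set.ncard_univ]
  rfl

/-- A normal `p`-subgroup moves a point of a transitive set of squarefree size in an orbit of size `1`
or `p`; in the latter case the number of orbits is prime to `p`. -/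
theorem squarefree_relIndex {G : Type} [Group G] [Finite G] (N S : Subgroup G) [N.Normal] {p : ℕ}
    (hp : p.Prime) (hN : IsPGroup p N) (hS : Squarefree S.index) :
    S.relIndex N = 1 ∨ S.relIndex N = p ∧ ¬ p ∣ (N ⊔ S).index := by
  have : Fact p.Prime := ⟨hp⟩
  obtain ⟨e, he⟩ : ∃ e, S.relIndex N = p ^ e := hN.index (S.subgroupOf N)
  have h1 : S.relIndex N * (N ⊔ S).index = S.index := by
    rw [← relIndex_sup_of_normal]
    exact Subgroup.relIndex_mul_index le_sup_right
  rw [← h1, he] at hS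
  rcases e with - | e
  · exact Or.inl (by rw [he, pow_zero])
  · have h2 : ¬ p ∣ p ^ e * (N ⊔ S).index := fun h3 => hp.one_lt.ne' (Nat.isUnit_iff.1
      (hS p (by rw [pow_succ, mul_right_comm, mul_comm p]; exact Nat.mul_dvd_mul_right h3 p)))
    rcases e with - | e
    · exact Or.inr ⟨by rw [he, zero_add, pow_one], by simpa using h2⟩
    · exact absurd (Dvd.dvd.mul_right (dvd_pow_self p (by omega)) _) h2

/-- A normal `p`-subgroup acts through an abelian group on a transitive set of squarefree size. -/
theorem commutator_mem_of_squarefree {G : Type} [Group G] [Finite G] (N S : Subgroup G) [N.Normal]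
    {p : ℕ} (hp : p.Prime) (hN : IsPGroup p N) (hS : Squarefree S.index) {a b : G} (ha : a ∈ N)
    (hb : b ∈ N) : a * b * a⁻¹ * b⁻¹ ∈ S := by
  have : Fact p.Prime := ⟨hp⟩
  rcases squarefree_relIndex N S hp hN hS with h | ⟨h, -⟩
  · have h1 : N ≤ S := Subgroup.relIndex_eq_one.1 h
    exact h1 (N.mul_mem (N.mul_mem (N.mul_mem ha hb) (N.inv_mem ha)) (N.inv_mem hb))
  · change (S.subgroupOf N).index = p at h
    have h0 : (S.subgroupOf N).Normal := by
      apply Subgroup.normal_of_index_eq_minFac_card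
      obtain ⟨e, he⟩ := IsPGroup.iff_card.1 hN
      rw [h, he]
      have he0 : e ≠ 0 := by
        rintro rfl
        have h2 := (S.subgroupOf N).index_dvd_card
        rw [he, h, pow_zero, Nat.dvd_one] at h2
        exact hp.one_lt.ne' h2
      rw [hp.pow_minFac he0]
    have h1 : IsCyclic (N ⧸ S.subgroupOf N) := isCyclic_of_prime_card (p := p) h
    have h2 : IsMulCommutative (N ⧸ S.subgroupOf N) := IsCyclic.isMulCommutative
    have h3 := Subgroup.Normal.quotient_commutative_iff_commutator_le.1 h2
    have h4 := h3 (Subgroup.commutator_mem_commutator (Subgroup.mem_top (⟨a, ha⟩ : N))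
      (Subgroup.mem_top (⟨b, hb⟩ : N)))
    exact h4

/-- A `p`-subgroup lies, up to conjugacy, in every subgroup of index prime to `p`. -/
theorem exists_conj_le {G : Type} [Group G] [Finite G] (N K : Subgroup G) {p : ℕ} (hp : p.Prime)
    (hN : IsPGroup p N) (hK : ¬ p ∣ K.index) : ∃ g : G, ∀ x ∈ N, g⁻¹ * x * g ∈ K := by
  have : Fact p.Prime := ⟨hp⟩
  obtain ⟨y, hy⟩ := hN.nonempty_fixed_point_of_prime_not_dvd_card (G ⧸ K) hK
  obtain ⟨g, rfl⟩ := QuotientGroup.mk_surjective y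
  refine ⟨g, fun x hx => ?_⟩
  have h1 : ((x * g : G) : G ⧸ K) = (g : G ⧸ K) := hy ⟨x, hx⟩
  rw [eq_comm, QuotientGroup.eq] at h1
  rwa [mul_assoc]

/-! ### The socle of a brace with a generator of squarefree orbit size -/

namespace BraceData

variable {G A : Type} [Group G] [AddCommGroup A] {D : BraceData G A}

/-- `t` generates the additive group as a `G`-module. -/
def Gen (D : BraceData G A) (t : A) : Prop :=
  AddSubgroup.closure (Set.range fun g => D.φ g t) = ⊤

/-- For braces of order `n`: a generator of the additive `G`-module with stabilizer of squarefree
index lies in no proper subbrace. -/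
def GenStmt (n : ℕ) : Prop :=
  ∀ (G A : Type) [Group G] [AddCommGroup A] [Finite G] (D : BraceData G A), Nat.card G = n →
    ∀ t : A, D.Gen t → Squarefree (D.stab t).index →
    ∀ B : AddSubgroup A, D.IsSub B → t ∈ B → B = ⊤

theorem index_stab_φ (D : BraceData G A) (g : G) (x : A) :
    (D.stab (D.φ g x)).index = (D.stab x).index := by
  have h : D.stab (D.φ g x) = (D.stab x).map (MulAut.conj g : G →* G) := by
    ext h
    rw [Subgroup.mem_map]
    constructor
    · intro hh
      refine ⟨g⁻¹ * h * g, ?_, by simp [mul_assoc]⟩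
      rw [mem_stab, φ_mul, φ_mul, show D.φ h (D.φ g x) = D.φ g x from hh, φ_inv_self]
    · rintro ⟨y, hy, rfl⟩
      have hy' : D.φ y x = x := hy
      change D.φ (g * y * g⁻¹) (D.φ g x) = _
      rw [φ_mul, φ_inv_self, φ_mul, hy']
  rw [h]
  exact Subgroup.index_map_equiv _ (MulAut.conj g)

/-- An element fixing the whole orbit of a generator acts trivially. -/
theorem Gen.ker {t : A} (ht : D.Gen t) {x : G} (hx : ∀ g, D.φ x (D.φ g t) = D.φ g t) (a : A) :
    D.φ x a = a := by
  have h1 : (⊤ : AddSubgroup A) ≤ AddMonoidHom.eqLocus (D.φ x : A →+ A) (AddMonoidHom.id A) := by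
    rw [← ht, AddSubgroup.closure_le]
    rintro _ ⟨g, rfl⟩
    exact hx g
  exact h1 (AddSubgroup.mem_top a)

/-- The inductive step for the nontriviality of the socle. If `φ` were faithful, take a nontrivial
normal `p`-subgroup `N` of `G`, the Hall subgroups `P` and `Q` of order `p ^ e` and `m`, and the
corresponding torsion subgroups of `A`. Squarefreeness of the index yields a generator of the
`m`-torsion fixed by `P`, and `GenStmt m` then shows that `P` acts trivially there. So `P` is normal,
and it is abelian by squarefreeness again; any of its nonzero fixed points in the `p`-part of `A` is
in the socle. -/
theorem ker_ne_bot {n : ℕ} (ih : ∀ m < n, GenStmt m) [Finite G] (D : BraceData G A)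
    (hn : Nat.card G = n) (hn1 : 1 < n) {t : A} (ht : D.Gen t)
    (hsq : Squarefree (D.stab t).index) : ∃ g : G, g ≠ 1 ∧ ∀ a, D.φ g a = a := by
  by_contra! hcon
  have hφ : ∀ g, (∀ a, D.φ g a = a) → g = 1 := fun g hg => by
    by_contra h
    obtain ⟨a, ha⟩ := hcon g h
    exact ha (hg a)
  have hfA := D.finite_left
  have hsol := solvable n G A D hn
  have : Nontrivial G := Finite.one_lt_card_iff_nontrivial.1 (hn ▸ hn1)
  obtain ⟨p, hp, N, hN, hN0, hNp⟩ := exists_normal_pgroup G hsol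
  have : Fact p.Prime := ⟨hp⟩
  have hpn : p ∣ n := by
    obtain ⟨e, he⟩ := IsPGroup.iff_card.1 hNp
    have he0 : e ≠ 0 := by
      rintro rfl
      exact hN0 (Subgroup.card_eq_one.1 (by simpa using he))
    exact ((dvd_pow_self p he0).trans he.symm.dvd).trans (hn ▸ N.card_subgroup_dvd_card)
  obtain ⟨e, m, hpm, hem⟩ := Nat.exists_eq_pow_mul_and_not_dvd (by omega : n ≠ 0) p hp.ne_one
  have he0 : e ≠ 0 := by
    rintro rfl
    rw [pow_zero, one_mul] at hem
    exact hpm (hem ▸ hpn)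
  have hcop : Nat.Coprime (p ^ e) m :=
    Nat.Coprime.pow_left e ((Nat.Prime.coprime_iff_not_dvd hp).2 hpm)
  have hG : Nat.card G = p ^ e * m := by rw [hn, hem]
  have hG' : Nat.card G = m * p ^ e := by rw [hG, mul_comm]
  have hmn : m < n := by
    have h1 : 1 < p ^ e := Nat.one_lt_pow he0 hp.one_lt
    have h2 : 0 < m := Nat.pos_of_ne_zero (by rintro rfl; simp at hpm)
    rw [hem]; exact lt_mul_of_one_lt_left h2 h1
  obtain ⟨u, v, hu, hv, hum, huv⟩ :=
    exists_projector (A := A) hcop fun a => by rw [← hG, ← D.card_eq]; exact card_nsmul_eq_zero'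
  let P := D.hall (p ^ e)
  let Q := D.hall m
  have hPm : ∀ {a}, D.c a ∈ P ↔ a ∈ tor A (p ^ e) := IsSub.c_mem _
  have hQm : ∀ {a}, D.c a ∈ Q ↔ a ∈ tor A m := IsSub.c_mem _
  have iP : P.index = m := index_hall hcop hG
  have iQ : Q.index = p ^ e := index_hall hcop.symm hG'
  have hPp : IsPGroup p P := IsPGroup.of_card (card_hall hcop hG)
  have hPQ : ∀ g, ∃ a ∈ P, ∃ b ∈ Q, g = a * b :=
    exists_mul_of_coprime_index P Q (by rw [iP, iQ]; exact hcop.symm)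
  have hQP : ∀ g, ∃ a ∈ Q, ∃ b ∈ P, g = a * b :=
    exists_mul_of_coprime_index Q P (by rw [iP, iQ]; exact hcop)
  have hdisj : ∀ g, g ∈ P → g ∈ Q → g = 1 := fun g h1 h2 => by
    obtain ⟨a, rfl⟩ := D.bij.2 g
    rw [tor_inf hcop (hPm.1 h1) (hQm.1 h2), c_zero]
  have hcomm2 : ∀ a b, D.c (D.φ (D.c b) a) * D.c b = D.c (D.φ (D.c a) b) * D.c a := fun a b => by
    rw [← coc, ← coc, add_comm]
  have hNP : N ≤ P := fun x hx => by
    obtain ⟨g, hg⟩ := exists_conj_le N P hp hNp (by rwa [iP])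
    have h1 := hg _ (hN.conj_mem x hx g)
    convert h1 using 1
    group
  -- `N` acts trivially on the `p'`-part of the additive group
  have hNQ : ∀ x ∈ N, ∀ b ∈ tor A m, D.φ x b = b := fun x hx b hb => by
    obtain ⟨a, rfl⟩ := D.bij.2 x
    have h1 := hcomm2 a b
    have h2 : D.c (D.φ (D.c a) b) * (D.c b)⁻¹ =
        D.c (D.φ (D.c b) a) * (D.c b * (D.c a)⁻¹ * (D.c b)⁻¹) := by
      rw [← mul_assoc, ← mul_assoc, h1, mul_assoc _ _ (D.c a)⁻¹, mul_inv_cancel, mul_one]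
    have h3 : D.c (D.φ (D.c a) b) * (D.c b)⁻¹ = 1 := by
      refine hdisj _ ?_ (Q.mul_mem (hQm.2 (φ_mem_tor _ hb)) (Q.inv_mem (hQm.2 hb)))
      rw [h2]
      exact P.mul_mem (hPm.2 (φ_mem_tor _ (hPm.1 (hNP hx))))
        (hNP (hN.conj_mem _ (N.inv_mem hx) _))
    exact D.bij.1 (mul_inv_eq_one.1 h3)
  -- hence some translate `b` of the projection of `t` is fixed by `P`
  have hpS : ¬ p ∣ (D.stab (u • t)).index := by
    have h1 : N ⊔ D.stab t ≤ D.stab (u • t) := by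
      refine sup_le (fun x hx => hNQ x hx _ (hu t)) fun x hx => ?_
      have hx' : D.φ x t = t := hx
      rw [mem_stab, map_nsmul, hx']
    rcases squarefree_relIndex N (D.stab t) hp hNp hsq with h2 | ⟨-, h2⟩
    · exfalso
      apply hN0
      rw [eq_bot_iff]
      intro x hx
      refine Subgroup.mem_bot.2 (hφ x (ht.ker fun g => ?_))
      have h3 : D.φ (g⁻¹ * x * g) t = t := by
        have := hN.conj_mem x hx g⁻¹
        rw [inv_inv] at this
        exact Subgroup.relIndex_eq_one.1 h2 this
      have h4 := congrArg (D.φ g) h3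
      rw [← φ_mul] at h4
      rw [← φ_mul, ← h4]
      congr 2
      group
    · exact fun h3 => h2 (h3.trans (Subgroup.index_dvd_of_le h1))
  obtain ⟨g, hg⟩ := exists_conj_le P (D.stab (u • t)) hp hPp hpS
  let b := D.φ g (u • t)
  have hbm : b ∈ tor A m := φ_mem_tor _ (hu t)
  have hPb : ∀ x ∈ P, D.φ x b = b := fun x hx => by
    have h1 : D.φ (g⁻¹ * x * g) (u • t) = u • t := hg x hx
    have h4 := congrArg (D.φ g) h1
    rw [← φ_mul] at h4
    change D.φ x (D.φ g (u • t)) = D.φ g (u • t)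
    rw [← φ_mul, ← h4]
    congr 2
    group
  -- induction applies to the subbrace `Q` with generator `b`
  let DQ := (D.isSub_tor m).data
  let b' : tor A m := ⟨b, hbm⟩
  have hgenQ : DQ.Gen b' := by
    rw [Gen, eq_top_iff]
    rintro ⟨a, ha⟩ -
    have h1 : a ∈ AddSubgroup.closure (Set.range fun h => D.φ h b) := by
      have h2 : (nsmulAddMonoidHom u : A →+ A) a ∈
          (AddSubgroup.closure (Set.range fun h => D.φ h t)).map (nsmulAddMonoidHom u) :=
        AddSubgroup.mem_map_of_mem _ (by rw [ht]; trivial)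
      rw [AddMonoidHom.map_closure, nsmulAddMonoidHom_apply, hum a ha] at h2
      refine AddSubgroup.closure_mono ?_ h2
      rintro _ ⟨_, ⟨h, rfl⟩, rfl⟩
      refine ⟨h * g⁻¹, ?_⟩
      change D.φ (h * g⁻¹) (D.φ g (u • t)) = u • D.φ h t
      rw [← φ_mul, inv_mul_cancel_right, map_nsmul]
    have h3 : a ∈ (AddSubgroup.closure (Set.range fun h => DQ.φ h b')).map (tor A m).subtype := by
      rw [AddMonoidHom.map_closure]
      refine AddSubgroup.closure_mono ?_ h1
      rintro _ ⟨h, rfl⟩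
      obtain ⟨x, hx, y, hy, rfl⟩ := hQP h
      refine ⟨_, ⟨⟨x, hx⟩, rfl⟩, ?_⟩
      change D.φ x b = D.φ (x * y) b
      rw [φ_mul, hPb y hy]
    obtain ⟨a', ha', h4⟩ := h3
    have h5 : a' = ⟨a, ha⟩ := Subtype.ext h4
    exact h5 ▸ ha'
  have hsqQ : Squarefree (DQ.stab b').index := by
    have h1 : DQ.stab b' = (D.stab b).subgroupOf Q := by
      ext x
      rw [Subgroup.mem_subgroupOf, mem_stab, mem_stab]
      exact Subtype.ext_iff
    have h2 : (DQ.stab b').index = (D.stab (u • t)).index := by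
      rw [h1, ← D.index_stab_φ g (u • t)]
      refine relIndex_eq_index_of_mul Q (D.stab b) fun h => ?_
      obtain ⟨x, hx, y, hy, rfl⟩ := hQP h
      exact ⟨x, hx, y, hPb y hy, rfl⟩
    rw [h2]
    refine hsq.squarefree_of_dvd (Subgroup.index_dvd_of_le fun x hx => ?_)
    have hx' : D.φ x t = t := hx
    rw [mem_stab, map_nsmul, hx']
  let B' : AddSubgroup (tor A m) :=
    { carrier := {a | ∀ x ∈ P, D.φ x a = a}
      add_mem' := fun {a b} ha hb x hx => by
        rw [AddSubgroup.coe_add, map_add, ha x hx, hb x hx]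
      zero_mem' := fun x _ => map_zero _
      neg_mem' := fun {a} ha x hx => by rw [AddSubgroup.coe_neg, map_neg, ha x hx] }
  -- the fixed points of `P` form a subbrace of the `m`-torsion containing the generator
  have hB' : B' = ⊤ := by
    refine ih m hmn Q (tor A m) DQ (card_hall hcop.symm hG') b' hgenQ hsqQ B' ?_ hPb
    intro a ha d hd x hx
    change D.φ x (D.φ (D.c d) a) = D.φ (D.c d) a
    obtain ⟨y, rfl⟩ := D.bij.2 x
    have h1 : D.c (D.φ (D.c (d : A))⁻¹ y) ∈ P := hPm.2 (φ_mem_tor _ (hPm.1 hx))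
    have h2 := hcomm2 (D.φ (D.c (d : A))⁻¹ y) d
    rw [φ_self_inv, hd _ h1] at h2
    rw [← φ_mul, h2, φ_mul, ha _ h1]
  have hPtriv : ∀ x ∈ P, ∀ a ∈ tor A m, D.φ x a = a := fun x hx a ha => by
    have h1 : (⟨a, ha⟩ : tor A m) ∈ B' := hB' ▸ AddSubgroup.mem_top _
    exact h1 x hx
  have hPn : P.Normal := ⟨fun x hx h => by
    obtain ⟨q, hq, y, hy, rfl⟩ := hQP h
    have h0 := P.mul_mem (P.mul_mem hy hx) (P.inv_mem hy)
    obtain ⟨a, ha⟩ := D.bij.2 (y * x * y⁻¹)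
    obtain ⟨d, rfl⟩ := D.bij.2 q
    rw [← ha] at h0
    have h1 := hcomm2 a d
    rw [hPtriv _ h0 d (hQm.1 hq)] at h1
    have h2 : D.c d * y * x * (D.c d * y)⁻¹ = D.c (D.φ (D.c d) a) := by
      rw [eq_comm, ← mul_inv_eq_iff_eq_mul.2 h1.symm, ha]
      group
    rw [h2]
    exact hPm.2 (φ_mem_tor _ (hPm.1 h0))⟩
  have hPab : ∀ x ∈ P, ∀ y ∈ P, x * y = y * x := fun x hx y hy => by
    have h1 : x * y * x⁻¹ * y⁻¹ = 1 := by
      refine hφ _ (ht.ker fun g => ?_)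
      exact commutator_mem_of_squarefree P (D.stab (D.φ g t)) hp hPp
        (by rw [index_stab_φ]; exact hsq) hx hy
    rw [mul_inv_eq_one, mul_inv_eq_iff_eq_mul] at h1
    exact h1
  -- a nonzero fixed point of `P` on its own additive group lies in the socle
  let DP := (D.isSub_tor (p ^ e)).data
  let act : MulAction P (tor A (p ^ e)) :=
    { smul := fun x a => DP.φ x a
      one_smul := DP.φ_one
      mul_smul := DP.φ_mul }
  have hcP : p ∣ Nat.card (tor A (p ^ e)) := by
    rw [card_tor hcop (D.card_eq.trans hG)]
    exact dvd_pow_self p he0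
  obtain ⟨⟨a, ha⟩, hfix, hne⟩ := hPp.exists_fixed_point_of_prime_dvd_card_of_fixed_point
    (tor A (p ^ e)) hcP (a := 0) fun x => map_zero (DP.φ x)
  have hafix : ∀ x ∈ P, D.φ x a = a := fun x hx => congrArg Subtype.val (hfix ⟨x, hx⟩)
  have h1 : D.c a = 1 := by
    refine hφ _ fun w => ?_
    have hk : ∀ w ∈ tor A (p ^ e), D.φ (D.c a) w = w := fun w hw => by
      have h2 := hcomm2 a w
      rw [hafix _ (hPm.2 hw), hPab _ (hPm.2 ha) _ (hPm.2 hw)] at h2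
      exact (D.bij.1 (mul_right_cancel h2)).symm
    rw [← huv w, map_add, hPtriv _ (hPm.2 ha) _ (hu w), hk _ (hv w)]
  exact hne (Subtype.ext (D.bij.1 (by rw [h1]; exact D.c_zero)))

end BraceData

namespace BraceData

variable {G A : Type} [Group G] [AddCommGroup A] (D : BraceData G A)

theorem c_add_of_ker {a i : A} (hi : D.c i ∈ D.φ.ker) : D.c (a + i) = D.c a * D.c i := by
  rw [coc, MonoidHom.mem_ker.1 hi]
  rfl

/-- The socle of a brace (the part acting trivially), as an additive subgroup. -/
def soc : AddSubgroup A where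
  carrier := {a | D.c a ∈ D.φ.ker}
  add_mem' {a b} ha hb := by
    change D.c (a + b) ∈ D.φ.ker
    rw [D.c_add_of_ker hb]
    exact Subgroup.mul_mem _ ha hb
  zero_mem' := by
    change D.c 0 ∈ D.φ.ker
    rw [c_zero]
    exact Subgroup.one_mem _
  neg_mem' {a} ha := by
    change D.c (-a) ∈ D.φ.ker
    have h := D.c_add_of_ker (a := -a) ha
    rw [neg_add_cancel, c_zero, eq_comm, mul_eq_one_iff_eq_inv] at h
    rw [h]
    exact Subgroup.inv_mem _ ha

variable {D}

theorem mem_soc {a : A} : a ∈ D.soc ↔ D.c a ∈ D.φ.ker := Iff.rfl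

/-- The socle is an ideal: on it the action `φ` is conjugation. -/
theorem c_φ_soc (g : G) {i : A} (hi : i ∈ D.soc) : D.c (D.φ g i) = g * D.c i * g⁻¹ := by
  obtain ⟨b, rfl⟩ := D.bij.2 g
  have h := D.coc i b
  rw [add_comm, D.c_add_of_ker hi] at h
  rw [h, mul_inv_cancel_right]

theorem φ_mem_soc (g : G) {i : A} (hi : i ∈ D.soc) : D.φ g i ∈ D.soc := by
  rw [mem_soc, c_φ_soc g hi]
  exact (inferInstance : D.φ.ker.Normal).conj_mem _ hi g

theorem c_mk_eq_iff {a b : A} :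
    ((D.c a : G) : G ⧸ D.φ.ker) = (D.c b : G ⧸ D.φ.ker) ↔ (a : A ⧸ D.soc) = (b : A ⧸ D.soc) := by
  rw [QuotientGroup.eq, QuotientAddGroup.eq]
  constructor
  · intro h
    obtain ⟨i, hi⟩ := D.bij.2 ((D.c a)⁻¹ * D.c b)
    have hi' : D.c i ∈ D.φ.ker := hi ▸ h
    have h1 := D.c_add_of_ker (a := a) hi'
    rw [hi, mul_inv_cancel_left] at h1
    rw [← D.bij.1 h1, neg_add_cancel_left]
    exact hi'
  · intro h
    have h1 := D.c_add_of_ker (a := a) h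
    rw [add_neg_cancel_left] at h1
    rw [h1, inv_mul_cancel_left]
    exact h

variable (D) in
/-- The quotient of a brace by its socle. -/
def quot : BraceData (G ⧸ D.φ.ker) (A ⧸ D.soc) where
  φ := QuotientGroup.lift D.φ.ker
    { toFun := fun g => QuotientAddGroup.map D.soc D.soc (D.φ g : A →+ A) fun _ hi => φ_mem_soc g hi
      map_one' := AddMonoidHom.ext fun x => by
        obtain ⟨a, rfl⟩ := QuotientAddGroup.mk_surjective x
        exact congrArg _ (D.φ_one a)
      map_mul' := fun g h => AddMonoidHom.ext fun x => by
        obtain ⟨a, rfl⟩ := QuotientAddGroup.mk_surjective x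
        exact congrArg _ (D.φ_mul g h a) }
    fun g hg => AddMonoidHom.ext fun x => by
      obtain ⟨a, rfl⟩ := QuotientAddGroup.mk_surjective x
      exact congrArg (fun f : AddMonoid.End A => ((f a : A) : A ⧸ D.soc)) (MonoidHom.mem_ker.1 hg)
  c := fun x => Quotient.liftOn' x (fun a => ((D.c a : G) : G ⧸ D.φ.ker)) fun a b h =>
    c_mk_eq_iff.2 (Quotient.sound' h)
  bij := by
    constructor
    · intro x y h
      obtain ⟨a, rfl⟩ := QuotientAddGroup.mk_surjective x
      obtain ⟨b, rfl⟩ := QuotientAddGroup.mk_surjective y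
      exact c_mk_eq_iff.1 h
    · intro y
      obtain ⟨g, rfl⟩ := QuotientGroup.mk_surjective y
      obtain ⟨a, rfl⟩ := D.bij.2 g
      exact ⟨(a : A ⧸ D.soc), rfl⟩
  coc := fun x y => by
    obtain ⟨a, rfl⟩ := QuotientAddGroup.mk_surjective x
    obtain ⟨b, rfl⟩ := QuotientAddGroup.mk_surjective y
    exact congrArg (fun g : G => (g : G ⧸ D.φ.ker)) (D.coc a b)

/-- The statement `GenStmt n` follows by induction from the nontriviality of the socle: a subbrace
containing `t` surjects onto the quotient by the socle, so it contains the whole `G`-orbit of `t`. -/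
theorem genStmt (n : ℕ) : GenStmt n := by
  induction n using Nat.strong_induction_on with
  | _ n ih =>
  intro G A _ _ _ D hn t ht hsq B hB htB
  have hfA := D.finite_left
  rcases le_or_gt n 1 with hn1 | hn1
  · have h1 : Subsingleton A := Finite.card_le_one_iff_subsingleton.1 (by rw [D.card_eq, hn]; exact hn1)
    exact AddSubgroup.ext fun x => by simp [Subsingleton.elim x 0, B.zero_mem]
  obtain ⟨g₀, hg₀, hg₁⟩ := ker_ne_bot ih D hn hn1 ht hsq
  have hK : D.φ.ker ≠ ⊥ := fun h => hg₀ <| by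
    rw [← Subgroup.mem_bot, ← h, MonoidHom.mem_ker]
    exact AddMonoidHom.ext hg₁
  have hlt : Nat.card (G ⧸ D.φ.ker) < n := by
    have c1 := D.φ.ker.card_mul_index
    have c2 : 1 < Nat.card D.φ.ker := (Subgroup.one_lt_card_iff_ne_bot _).2 hK
    have c4 : 0 < D.φ.ker.index := Nat.pos_of_ne_zero Subgroup.FiniteIndex.index_ne_zero
    change D.φ.ker.index < n
    rw [← hn, ← c1]; exact lt_mul_of_one_lt_left c4 c2
  let mk := QuotientAddGroup.mk' D.soc
  have hBtop : B.map mk = ⊤ := by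
    refine ih _ hlt _ _ D.quot rfl (mk t) ?_ ?_ _ ?_ (AddSubgroup.mem_map_of_mem _ htB)
    · rw [Gen, eq_top_iff]
      rintro x -
      obtain ⟨a, rfl⟩ := QuotientAddGroup.mk_surjective x
      have h1 : mk a ∈ (AddSubgroup.closure (Set.range fun g => D.φ g t)).map mk :=
        AddSubgroup.mem_map_of_mem _ (by rw [ht]; trivial)
      rw [AddMonoidHom.map_closure] at h1
      refine AddSubgroup.closure_mono ?_ h1
      rintro _ ⟨_, ⟨g, rfl⟩, rfl⟩
      exact ⟨(g : G ⧸ D.φ.ker), rfl⟩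
    · refine hsq.squarefree_of_dvd ?_
      refine (Subgroup.index_dvd_of_le ?_).trans
        (Subgroup.index_map_dvd (D.stab t) (QuotientGroup.mk'_surjective D.φ.ker))
      rintro _ ⟨g, hg, rfl⟩
      exact congrArg mk hg
    · rintro _ ⟨a, ha, rfl⟩ _ ⟨b, hb, rfl⟩
      exact ⟨_, hB a ha b hb, rfl⟩
  rw [eq_top_iff, ← ht, AddSubgroup.closure_le]
  rintro _ ⟨g, rfl⟩
  obtain ⟨a, rfl⟩ := D.bij.2 g
  obtain ⟨b, hb, hab⟩ : mk a ∈ B.map mk := hBtop ▸ AddSubgroup.mem_top _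
  have h1 := c_mk_eq_iff.2 hab
  have h2 : D.φ (D.c a) t = D.φ (D.c b) t := by
    rw [QuotientGroup.eq, MonoidHom.mem_ker] at h1
    have h3 : D.φ ((D.c b)⁻¹ * D.c a) t = t := by rw [h1]; rfl
    rw [φ_mul] at h3
    rw [← D.φ_self_inv (D.c b) (D.φ (D.c a) t), h3]
  change D.φ (D.c a) t ∈ B
  rw [h2]
  exact hB t htB b hb

/-- Braces generated as a module by an element whose stabilizer has squarefree index have a
nontrivial socle. -/
theorem exists_ker [Finite G] (D : BraceData G A) (hG : 1 < Nat.card G) {t : A} (ht : D.Gen t)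
    (hsq : Squarefree (D.stab t).index) : ∃ g : G, g ≠ 1 ∧ ∀ a, D.φ g a = a :=
  ker_ne_bot (fun m _ => genStmt m) D rfl hG ht hsq

end BraceData

/-! ### The brace of a cycle set -/

namespace CycleSet

variable {X : Type}

theorem sigma_apply (C : CycleSet X) (x y : X) : C.sigma x y = C.op x y := rfl

theorem sigma_mem (C : CycleSet X) (x : X) : C.sigma x ∈ C.G :=
  Subgroup.subset_closure ⟨x, rfl⟩

theorem sigma_mul (C : CycleSet X) (x y : X) :
    C.sigma (C.op x y) * C.sigma x = C.sigma (C.op y x) * C.sigma y :=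
  Equiv.ext fun z => C.cyc x y z

/-- The left multiplication `σ_x` as an element of `G(X)`. -/
noncomputable def sG (C : CycleSet X) (x : X) : C.G := ⟨C.sigma x, C.sigma_mem x⟩

theorem shift_injective {C : CycleSet X} (hnd : C.Nondeg) (x : X) :
    Function.Injective fun g : C.G => C.sG (g.1 x) * g := by
  intro g h hgh
  have hgh' : C.sG (g.1 x) * g = C.sG (h.1 x) * h := hgh
  have h1 : C.op (g.1 x) (g.1 x) = C.op (h.1 x) (h.1 x) :=
    congrArg (fun k : C.G => k.1 x) hgh'
  rw [hnd.1 h1] at hgh'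
  exact mul_left_cancel hgh'

/-- The permutation `g ↦ σ_{g(x)} g` of `G(X)`; it is addition of `σ_x` in the brace on `G(X)`. -/
noncomputable def shift [Finite X] {C : CycleSet X} (hnd : C.Nondeg) (x : X) :
    Equiv.Perm C.G :=
  Equiv.ofBijective _ (Finite.injective_iff_bijective.1 (shift_injective hnd x))

theorem shift_apply [Finite X] {C : CycleSet X} (hnd : C.Nondeg) (x : X) (g : C.G) :
    shift hnd x g = C.sG (g.1 x) * g := rfl

theorem shift_comm [Finite X] {C : CycleSet X} (hnd : C.Nondeg) (x y : X) :
    shift hnd x * shift hnd y = shift hnd y * shift hnd x := by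
  ext1 g
  change C.sG (C.op (g.1 y) (g.1 x)) * (C.sG (g.1 y) * g)
    = C.sG (C.op (g.1 x) (g.1 y)) * (C.sG (g.1 x) * g)
  rw [← mul_assoc, ← mul_assoc]
  exact congrArg (· * g) (Subtype.ext (C.sigma_mul _ _))

/-- The permutation group of a finite non-degenerate cycle set carries a brace structure. Its
additive group is realised as the group of permutations of `G(X)` generated by the shifts, which is
abelian by the cycle set axiom and acts regularly. -/
theorem exists_brace [Finite X] (C : CycleSet X) (hnd : C.Nondeg) :
    ∃ (A : Type) (_ : AddCommGroup A) (D : BraceData C.G A) (r : X → A),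
      (∀ x, D.c (r x) = C.sG x) ∧ (∀ (g : C.G) x, D.φ g (r x) = r (g.1 x)) ∧
      AddSubgroup.closure (Set.range r) = ⊤ := by
  let S : Set (Equiv.Perm C.G) := Set.range (shift hnd)
  have hS : ∀ x ∈ S, ∀ y ∈ S, x * y = y * x := by
    rintro _ ⟨x, rfl⟩ _ ⟨y, rfl⟩
    exact shift_comm hnd x y
  let M := Subgroup.closure S
  let _ : CommGroup M :=
    { (inferInstance : Group M) with
      mul_comm := (Subgroup.isMulCommutative_closure hS).is_comm.comm }
  have hmem : ∀ x, shift hnd x ∈ M := fun x => Subgroup.subset_closure ⟨x, rfl⟩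
  -- conjugation by right multiplication permutes the shifts
  have hconj : ∀ (g : C.G) (x : X), MulAut.conj (Equiv.mulRight g⁻¹) (shift hnd x)
      = shift hnd (g.1 x) := by
    intro g x
    ext1 h
    change C.sG ((h * g⁻¹⁻¹).1 x) * (h * g⁻¹⁻¹) * g⁻¹ = C.sG (h.1 (g.1 x)) * h
    rw [inv_inv, mul_assoc, mul_inv_cancel_right]
    rfl
  have hconjM : ∀ (g : C.G), ∀ a ∈ M, MulAut.conj (Equiv.mulRight g⁻¹) a ∈ M := by
    intro g a ha
    have h1 : M ≤ M.comap (MulAut.conj (Equiv.mulRight g⁻¹)).toMonoidHom := by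
      refine (Subgroup.closure_le _).2 ?_
      rintro _ ⟨x, rfl⟩
      change MulAut.conj (Equiv.mulRight g⁻¹) (shift hnd x) ∈ M
      rw [hconj]
      exact hmem _
    exact h1 ha
  let F : C.G → M →* M := fun g =>
    { toFun := fun a => ⟨MulAut.conj (Equiv.mulRight g⁻¹) a.1, hconjM g a.1 a.2⟩
      map_one' := Subtype.ext (map_one _)
      map_mul' := fun a b => Subtype.ext (map_mul _ _ _) }
  have hF : ∀ g (a : M) h, (F g a).1 h = a.1 (h * g) * g⁻¹ := by
    intro g a h
    change a.1 (h * g⁻¹⁻¹) * g⁻¹ = _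
    rw [inv_inv]
  have hsurj : ∀ g : C.G, ∃ a : M, a.1 1 = g := by
    -- left multiplication by `σ_y` agrees at `g` with a shift
    have hl : ∀ y (g : C.G), (∃ a : M, a.1 1 = g) ↔ ∃ a : M, a.1 1 = C.sG y * g := by
      intro y g
      have hy : shift hnd (g.1⁻¹ y) g = C.sG y * g := by
        exact congrArg (fun z => C.sG z * g) (g.1.apply_symm_apply y)
      constructor
      · rintro ⟨a, ha⟩
        exact ⟨⟨_, hmem (g.1⁻¹ y)⟩ * a, (congrArg (shift hnd (g.1⁻¹ y)) ha).trans hy⟩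
      · rintro ⟨a, ha⟩
        refine ⟨⟨_, hmem (g.1⁻¹ y)⟩⁻¹ * a, ?_⟩
        change (shift hnd (g.1⁻¹ y))⁻¹ (a.1 1) = g
        rw [ha, ← hy]
        exact Equiv.symm_apply_apply _ _
    have key : ∀ k (hk : k ∈ C.G), ∀ g : C.G,
        (∃ a : M, a.1 1 = g) ↔ ∃ a : M, a.1 1 = (⟨k, hk⟩ : C.G) * g := by
      intro k hk
      induction hk using Subgroup.closure_induction with
      | mem k hk => obtain ⟨y, rfl⟩ := hk; exact hl y
      | one => intro g; rw [show (⟨1, _⟩ : C.G) = 1 from rfl, one_mul]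
      | mul x y hx hy h1 h2 =>
        intro g
        rw [h2 g, h1, ← mul_assoc]; rfl
      | inv x hx h1 =>
        intro g
        rw [h1 (_ * g), ← mul_assoc, show (⟨x, hx⟩ : C.G) * ⟨x⁻¹, _⟩ = 1 from mul_inv_cancel (⟨x, hx⟩ : C.G), one_mul]
    intro g
    have := (key g.1 g.2 1).1 ⟨1, rfl⟩
    rwa [mul_one] at this
  let D : BraceData C.G (Additive M) :=
    { φ :=
        { toFun := fun g => MonoidHom.toAdditive (F g)
          map_one' := AddMonoidHom.ext fun a => Subtype.ext <| Equiv.ext fun h => by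
            change (F 1 a.toMul).1 h = a.toMul.1 h
            rw [hF, mul_one, inv_one, mul_one]
          map_mul' := fun g g' => AddMonoidHom.ext fun a => Subtype.ext <| Equiv.ext fun h => by
            change (F (g * g') a.toMul).1 h = (F g (F g' a.toMul)).1 h
            rw [hF, hF, hF, mul_inv_rev, ← mul_assoc, ← mul_assoc] }
      c := fun a => a.toMul.1 1
      bij := by
        constructor
        · intro a b hab
          refine Subtype.ext (Equiv.ext fun g => ?_)
          obtain ⟨d, rfl⟩ := hsurj g
          have hab' : a.toMul.1 1 = b.toMul.1 1 := hab
          have e : ∀ a : M, a.1 (d.1 1) = d.1 (a.1 1) := fun a =>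
            congrArg (fun f : M => f.1 1) (mul_comm a d)
          exact (e _).trans ((congrArg d.1 hab').trans (e _).symm)
        · intro g
          obtain ⟨a, ha⟩ := hsurj g
          exact ⟨Additive.ofMul a, ha⟩
      coc := fun a b => by
        change a.toMul.1 (b.toMul.1 1) = (F (b.toMul.1 1) a.toMul).1 1 * _
        rw [hF, one_mul, inv_mul_cancel_right] }
  refine ⟨Additive M, inferInstance, D, fun x => Additive.ofMul ⟨shift hnd x, hmem x⟩, ?_, ?_, ?_⟩
  · intro x
    change shift hnd x 1 = _
    rw [shift_apply, mul_one]
    rfl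
  · intro g x
    exact Subtype.ext (hconj g x)
  · rw [eq_top_iff]
    rintro a -
    obtain ⟨a, ha⟩ := a
    induction ha using Subgroup.closure_induction with
    | mem k hk => obtain ⟨y, rfl⟩ := hk; exact AddSubgroup.subset_closure ⟨y, rfl⟩
    | one => exact AddSubgroup.zero_mem _
    | mul x y hx hy h1 h2 => exact AddSubgroup.add_mem _ h1 h2
    | inv x hx h1 => exact AddSubgroup.neg_mem _ h1

/-- For a nontrivial finite indecomposable non-degenerate cycle set of squarefree size, the elements
`k` of `G(X)` with `σ_{k(x)} = σ_x` for all `x` include a nontrivial normal `p`-subgroup of `G(X)`: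
they contain the socle of the brace on `G(X)`, a nontrivial abelian normal subgroup. -/
theorem exists_pgroup [Finite X] {C : CycleSet X} (hnd : C.Nondeg) (hind : C.Indec)
    (hX : 1 < Nat.card X) (hsq : Squarefree (Nat.card X)) :
    ∃ (p : ℕ) (N : Subgroup (Equiv.Perm X)), p.Prime ∧ N ≠ ⊥ ∧ IsPGroup p N ∧
      (∀ g ∈ C.G, ∀ k ∈ N, g * k * g⁻¹ ∈ N) ∧ N ≤ C.G ∧ ∀ k ∈ N, ∀ x, C.sigma (k x) = C.sigma x := by
  obtain ⟨A, _, D, r, hc, hφ, hr⟩ := exists_brace C hnd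
  obtain ⟨x₀, x₁, hne⟩ := Finite.one_lt_card_iff_nontrivial.1 hX
  have hnt : Nontrivial C.G := by
    obtain ⟨g, hg, hg1⟩ := hind x₀ x₁
    refine ⟨⟨g, hg⟩, 1, fun h => hne ?_⟩
    rw [← hg1, show g = 1 from congrArg Subtype.val h]
    rfl
  have hgen : D.Gen (r x₀) := by
    rw [BraceData.Gen, ← hr]
    congr 1
    ext a
    constructor
    · rintro ⟨g, rfl⟩
      exact ⟨_, (hφ g x₀).symm⟩
    · rintro ⟨x, rfl⟩
      obtain ⟨g, hg, rfl⟩ := hind x₀ x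
      exact ⟨⟨g, hg⟩, hφ _ _⟩
  have htrans : MulAction.IsPretransitive C.G X := ⟨fun a b => by
    obtain ⟨g, hg, h⟩ := hind a b
    exact ⟨⟨g, hg⟩, h⟩⟩
  have hstab : Squarefree (D.stab (r x₀)).index := by
    refine hsq.squarefree_of_dvd ?_
    rw [← MulAction.index_stabilizer_of_transitive C.G x₀]
    refine Subgroup.index_dvd_of_le fun g hg => ?_
    rw [BraceData.mem_stab, hφ]
    exact congrArg r hg
  obtain ⟨g₀, hg₀, hg₀'⟩ := D.exists_ker (Finite.one_lt_card_iff_nontrivial.2 hnt) hgen hstab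
  have hker : ∀ g : C.G, g ∈ D.φ.ker → ∀ x, C.sigma (g.1 x) = C.sigma x := by
    intro g hg x
    have h1 : D.φ g (r x) = r x := by rw [MonoidHom.mem_ker.1 hg]; rfl
    rw [hφ] at h1
    have h2 := congrArg D.c h1
    rw [hc, hc] at h2
    exact congrArg Subtype.val h2
  have hcomm : ∀ g ∈ D.φ.ker, ∀ h ∈ D.φ.ker, Commute g h := by
    intro g hg h hh
    obtain ⟨i, rfl⟩ := D.bij.2 g
    obtain ⟨j, rfl⟩ := D.bij.2 h
    rw [Commute, SemiconjBy, ← D.c_add_of_ker hh, ← D.c_add_of_ker hg, add_comm]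
  have hg₀k : g₀ ∈ D.φ.ker := MonoidHom.mem_ker.2 (AddMonoidHom.ext hg₀')
  -- `N` is the `p`-torsion of the socle
  obtain ⟨p, hp, hpd⟩ := Nat.exists_prime_and_dvd (n := orderOf g₀) (by rwa [Ne, orderOf_eq_one_iff])
  let N : Subgroup C.G :=
    { carrier := {g | g ∈ D.φ.ker ∧ g ^ p = 1}
      mul_mem' := fun {a b} ha hb => ⟨mul_mem ha.1 hb.1, by
        rw [(hcomm a ha.1 b hb.1).mul_pow, ha.2, hb.2, one_mul]⟩
      one_mem' := ⟨one_mem _, one_pow _⟩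
      inv_mem' := fun {a} ha => ⟨inv_mem ha.1, by rw [inv_pow, ha.2, inv_one]⟩ }
  refine ⟨p, N.map C.G.subtype, hp, ?_, ?_, ?_, ?_, ?_⟩
  · intro h
    rw [Subgroup.map_eq_bot_iff_of_injective _ C.G.subtype_injective] at h
    have h1 : g₀ ^ (orderOf g₀ / p) ∈ N := ⟨pow_mem hg₀k _, by
      rw [← pow_mul, Nat.div_mul_cancel hpd, pow_orderOf_eq_one]⟩
    rw [h, Subgroup.mem_bot] at h1
    have h2 := Nat.le_of_dvd (Nat.div_pos (Nat.le_of_dvd (orderOf_pos g₀) hpd) hp.pos)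
      (orderOf_dvd_of_pow_eq_one h1)
    exact absurd h2 (not_le.2 (Nat.div_lt_self (orderOf_pos g₀) hp.one_lt))
  · rintro ⟨_, k, hk, rfl⟩
    refine ⟨1, Subtype.ext ?_⟩
    rw [pow_one]
    exact congrArg (fun k : C.G => k.1) hk.2
  · rintro g hg _ ⟨k, hk, rfl⟩
    refine ⟨⟨g, hg⟩ * k * ⟨g, hg⟩⁻¹, ⟨?_, ?_⟩, rfl⟩
    · exact (inferInstance : D.φ.ker.Normal).conj_mem _ hk.1 _
    · rw [conj_pow, hk.2, mul_one, mul_inv_cancel]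
  · rintro _ ⟨k, hk, rfl⟩
    exact k.2
  · rintro _ ⟨k, hk, rfl⟩ x
    exact hker k hk.1 x

end CycleSet

/-! ### Epimorphisms and chains -/

namespace CycleSet

variable {X Y : Type} {C : CycleSet X} {D : CycleSet Y} {f : X → Y}

/-- Along a homomorphism, every element of `G(X)` induces an element of `G(Y)`. -/
theorem IsHom.induced (hf : IsHom C D f) :
    ∀ g ∈ C.G, ∃ g' ∈ D.G, ∀ x, f (g x) = g' (f x) := by
  intro g hg
  induction hg using Subgroup.closure_induction with
  | mem k hk =>
    obtain ⟨a, rfl⟩ := hk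
    exact ⟨D.sigma (f a), D.sigma_mem _, fun x => hf a x⟩
  | one => exact ⟨1, one_mem _, fun x => rfl⟩
  | mul x y hx hy h1 h2 =>
    obtain ⟨a, ha, ha'⟩ := h1
    obtain ⟨b, hb, hb'⟩ := h2
    exact ⟨a * b, mul_mem ha hb, fun z => (ha' _).trans (congrArg a (hb' z))⟩
  | inv x hx h1 =>
    obtain ⟨a, ha, ha'⟩ := h1
    refine ⟨a⁻¹, inv_mem ha, fun z => ?_⟩
    have h2 := ha' (x⁻¹ z)
    have h3 : x (x⁻¹ z) = z := x.apply_symm_apply z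
    rw [h3] at h2
    rw [h2]
    exact (a.symm_apply_apply _).symm

theorem IsHom.indec (hf : IsHom C D f) (hs : Function.Surjective f) (hC : C.Indec) : D.Indec := by
  intro a b
  obtain ⟨a, rfl⟩ := hs a
  obtain ⟨b, rfl⟩ := hs b
  obtain ⟨g, hg, rfl⟩ := hC a b
  obtain ⟨g', hg', h⟩ := hf.induced g hg
  exact ⟨g', hg', (h a).symm⟩

/-- The fibres of an epimorphism from an indecomposable cycle set have the same size. -/
theorem IsHom.card_eq [Finite X] (hf : IsHom C D f) (hs : Function.Surjective f) (hC : C.Indec)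
    (y : Y) : Nat.card X = Nat.card Y * Nat.card {x // f x = y} := by
  have hY : Finite Y := Finite.of_surjective f hs
  have hle : ∀ y z : Y, Nat.card {x // f x = y} ≤ Nat.card {x // f x = z} := by
    intro y z
    obtain ⟨a, rfl⟩ := hs y
    obtain ⟨b, rfl⟩ := hs z
    obtain ⟨g, hg, rfl⟩ := hC a b
    obtain ⟨g', hg', h⟩ := hf.induced g hg
    refine Nat.card_le_card_of_injective
      (fun x => ⟨g x.1, by rw [h, h, x.2]⟩ : {x // f x = f a} → {x // f x = f (g a)}) ?_
    intro u v huv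
    exact Subtype.ext (g.injective (congrArg Subtype.val huv))
  have := Fintype.ofFinite Y
  rw [← Nat.card_congr (Equiv.sigmaFiberEquiv f), Nat.card_sigma,
    Finset.sum_congr rfl fun z _ => le_antisymm (hle z y) (hle y z), Finset.sum_const,
    Finset.card_univ, smul_eq_mul, Nat.card_eq_fintype_card (α := Y)]

/-- A finite indecomposable non-degenerate cycle set of squarefree size has an epimorphism onto a
non-degenerate cycle set whose size is smaller by exactly one prime factor. Its fibres are the
orbits of a normal `p`-subgroup of `G(X)` preserving the `σ_x`. -/
theorem exists_epi [Finite X] (hnd : C.Nondeg) (hind : C.Indec)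
    (hX : 1 < Nat.card X) (hsq : Squarefree (Nat.card X)) :
    ∃ (Y : Type) (_ : Finite Y) (D : CycleSet Y) (f : X → Y) (p : ℕ), p.Prime ∧
      Function.Surjective f ∧ IsHom C D f ∧ D.Nondeg ∧ D.Indec ∧
      Nat.card X = Nat.card Y * p := by
  obtain ⟨p, N, hp, hN, hpN, hnorm, hNG, hsig⟩ := exists_pgroup hnd hind hX hsq
  let Y := MulAction.orbitRel.Quotient N X
  let f : X → Y := Quotient.mk''
  have hfs : Function.Surjective f := Quotient.mk''_surjective
  have hfe : ∀ {a b : X}, f a = f b ↔ ∃ k ∈ N, k b = a := by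
    intro a b
    rw [show f a = f b ↔ _ from Quotient.eq'']
    constructor
    · rintro ⟨⟨k, hk⟩, h⟩
      exact ⟨k, hk, h⟩
    · rintro ⟨k, hk, h⟩
      exact ⟨⟨k, hk⟩, h⟩
  have hop : ∀ a b a' b', f a = f a' → f b = f b' → f (C.op a b) = f (C.op a' b') := by
    intro a b a' b' ha hb
    obtain ⟨k, hk, rfl⟩ := hfe.1 ha
    obtain ⟨l, hl, rfl⟩ := hfe.1 hb
    refine hfe.2 ⟨C.sigma a' * l * (C.sigma a')⁻¹, hnorm _ (C.sigma_mem _) l hl, ?_⟩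
    have h1 : C.op (k a') (l b') = C.op a' (l b') :=
      congrArg (fun s : Equiv.Perm X => s (l b')) (hsig k hk a')
    rw [h1]
    exact congrArg (fun z => C.sigma a' (l z)) ((C.sigma a').symm_apply_apply b')
  let op : Y → Y → Y := Quotient.map₂ C.op fun a a' ha b b' hb =>
    Quotient.eq''.1 (hop a b a' b' (Quotient.eq''.2 ha) (Quotient.eq''.2 hb))
  have hop' : ∀ a b, f (C.op a b) = op (f a) (f b) := fun a b => rfl
  let D : CycleSet Y :=
    { op := op
      bij := fun y => by
        obtain ⟨a, rfl⟩ := hfs y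
        refine Finite.surjective_iff_bijective.1 fun z => ?_
        obtain ⟨b, rfl⟩ := hfs z
        obtain ⟨c, rfl⟩ := (C.bij a).2 b
        exact ⟨f c, rfl⟩
      cyc := fun x y z => by
        obtain ⟨a, rfl⟩ := hfs x
        obtain ⟨b, rfl⟩ := hfs y
        obtain ⟨c, rfl⟩ := hfs z
        exact congrArg f (C.cyc a b c) }
  have hhom : IsHom C D f := hop'
  have hDnd : D.Nondeg := by
    refine Finite.surjective_iff_bijective.1 fun z => ?_
    obtain ⟨b, rfl⟩ := hfs z
    obtain ⟨c, rfl⟩ := hnd.2 b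
    exact ⟨f c, rfl⟩
  refine ⟨Y, inferInstance, D, f, p, hp, hfs, hhom, hDnd, hhom.indec hfs hind, ?_⟩
  -- some point is moved by `N`; its orbit has `p`-power size dividing `|X|`, hence size `p`
  obtain ⟨x, k, hk, hkx⟩ : ∃ x, ∃ k ∈ N, k x ≠ x := by
    by_contra! h
    exact hN ((Subgroup.eq_bot_iff_forall _).2 fun k hk => Equiv.ext fun x => h x k hk)
  have hcard := hhom.card_eq hfs hind (f x)
  have horb : Nat.card {z // f z = f x} = Nat.card (MulAction.orbit N x) := by
    refine Nat.card_congr (Equiv.subtypeEquivRight fun z => ?_)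
    exact Quotient.eq''
  have := Fact.mk hp
  obtain ⟨m, hm⟩ := hpN.card_orbit x
  rw [horb, hm] at hcard
  have hm1 : m ≠ 0 := by
    rintro rfl
    rw [pow_zero] at hm
    have := Finite.card_le_one_iff_subsingleton.1 hm.le
    exact hkx (congrArg Subtype.val (Subsingleton.elim
      (⟨k x, ⟨⟨k, hk⟩, rfl⟩⟩ : MulAction.orbit N x) ⟨x, MulAction.mem_orbit_self x⟩))
  have hsqm : Squarefree (p ^ m) := hsq.squarefree_of_dvd (hcard ▸ dvd_mul_left _ _)
  rcases (Nat.squarefree_pow_iff hp.ne_one hm1).1 hsqm with ⟨-, rfl⟩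
  rw [hcard, pow_one]

/-- An epimorphism onto a smaller nontrivial cycle set can be prepended to a chain. -/
theorem HasChain.cons [Finite X] [Finite Y] (hf : IsHom C D f) (hs : Function.Surjective f)
    (hlt : Nat.card Y < Nat.card X) (hY : 1 < Nat.card Y) {k : ℕ} (hk : 1 ≤ k)
    (h : HasChain D k) : HasChain C (k + 1) := by
  obtain ⟨T, hT, CS, e, he, hhom, hc, hp, hprim⟩ := h
  have hc0 : Nat.card (T 0) = Nat.card Y := (Nat.card_congr (Equiv.ofBijective e he)).symm
  let T' : ℕ → Type := fun i => Nat.casesOn i X T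
  let CS' : ∀ i, CycleSet (T' i) := fun i => Nat.casesOn i C CS
  refine ⟨T', fun i => ?_, CS', id, Function.bijective_id, fun _ _ => rfl, ?_, ?_, ?_⟩
  · cases i
    · exact (inferInstance : Finite X)
    · exact hT _
  · rintro (_ | i) hi
    · change Nat.card (T 0) < Nat.card X ∧ 1 < Nat.card (T 0)
      rw [hc0]
      exact ⟨hlt, hY⟩
    · exact hc i (by omega)
  · rintro (_ | i) hi
    · refine ⟨e ∘ f, he.2.comp hs, fun a b => ?_⟩
      exact (congrArg e (hf a b)).trans (hhom _ _)
    · exact hp i (by omega)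
  · obtain ⟨k, rfl⟩ : ∃ l, k = l + 1 := ⟨k - 1, by omega⟩
    exact hprim

theorem primitive_of_prime [Finite X] (hind : C.Indec) (hp : (Nat.card X).Prime) :
    C.Primitive := by
  have htrans : MulAction.IsPretransitive C.G X := ⟨fun a b => by
    obtain ⟨g, hg, h⟩ := hind a b
    exact ⟨⟨g, hg⟩, h⟩⟩
  have hprim : MulAction.IsPreprimitive C.G X := MulAction.IsPreprimitive.of_prime_card hp
  refine ⟨hind, fun s hs => ?_⟩
  have hb : MulAction.IsBlock C.G s := by
    rw [MulAction.isBlock_iff_smul_eq_or_disjoint]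
    intro g
    exact hs g.1 g.2
  exact hprim.isTrivialBlock_of_isBlock hb

open ArithmeticFunction in
theorem hasChain_of_squarefree (n : ℕ) : ∀ {X : Type} [Finite X] (C : CycleSet X), C.Nondeg →
    C.Indec → Squarefree (Nat.card X) → cardFactors (Nat.card X) = n + 1 → HasChain C (n + 1) := by
  induction n with
  | zero =>
    intro X _ C hnd hind hsq hn
    have hp : (Nat.card X).Prime := cardFactors_eq_one_iff_prime.1 hn
    refine ⟨fun _ => X, fun _ => inferInstance, fun _ => C, id, Function.bijective_id,
      fun _ _ => rfl, fun i hi => by omega, fun i hi => by omega, primitive_of_prime hind hp⟩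
  | succ n ih =>
    intro X _ C hnd hind hsq hn
    have hX : 1 < Nat.card X := by
      by_contra! h
      interval_cases Nat.card X <;> simp at hn
    obtain ⟨Y, _, D, f, p, hp, hs, hf, hDn, hDi, hcard⟩ := exists_epi hnd hind hX hsq
    have hY0 : Nat.card Y ≠ 0 := by rintro h; rw [h, zero_mul] at hcard; omega
    have hY1 : cardFactors (Nat.card Y) = n + 1 := by
      rw [hcard, cardFactors_mul hY0 hp.ne_zero, cardFactors_apply_prime hp] at hn
      omega
    refine HasChain.cons hf hs ?_ ?_ (by omega) (ih D hDn hDi ?_ hY1)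
    · rw [hcard]
      exact lt_mul_of_one_lt_right (by omega) hp.one_lt
    · by_contra! h
      interval_cases Nat.card Y <;> simp at hY1
    · exact hsq.squarefree_of_dvd (hcard ▸ dvd_mul_right _ _)

open ArithmeticFunction in
/-- Each step of a chain loses at least one prime factor of the cardinality, and the last term is
nontrivial. -/
theorem le_of_hasChain [Finite X] (hind : C.Indec) (hX : 1 < Nat.card X) {m : ℕ}
    (h : HasChain C m) : m ≤ cardFactors (Nat.card X) := by
  obtain ⟨T, hT, CS, e, he, hhom, hc, hp, -⟩ := h
  have hc0 : Nat.card (T 0) = Nat.card X := (Nat.card_congr (Equiv.ofBijective e he)).symm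
  have key : ∀ i, i < m → (CS i).Indec ∧ 1 < Nat.card (T i) ∧
      i + cardFactors (Nat.card (T i)) ≤ cardFactors (Nat.card X) := by
    intro i
    induction i with
    | zero =>
      intro _
      exact ⟨hhom.indec he.2 hind, by rwa [hc0], by rw [hc0, zero_add]⟩
    | succ i ih =>
      intro hi
      obtain ⟨h1, h2, h3⟩ := ih (by omega)
      obtain ⟨f, hs, hf⟩ := hp i hi
      obtain ⟨hlt, hgt⟩ := hc i hi
      refine ⟨hf.indec hs h1, hgt, ?_⟩
      obtain ⟨y⟩ : Nonempty (T (i + 1)) := (Nat.card_pos_iff.1 (by omega)).1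
      have hcard := hf.card_eq hs h1 y
      set q := Nat.card {x // f x = y}
      have hq : 1 < q := by
        by_contra! hq
        have := Nat.mul_le_mul_left (Nat.card (T (i + 1))) hq
        omega
      have hq1 : 0 < cardFactors q := by
        rw [Nat.pos_iff_ne_zero, Ne, cardFactors_eq_zero_iff_eq_zero_or_one]
        omega
      rw [hcard, cardFactors_mul (by omega) (by omega)] at h3
      omega
  rcases Nat.eq_zero_or_pos m with rfl | hm
  · exact Nat.zero_le _
  -- the last term still has at least one prime factor
  obtain ⟨-, h2, h3⟩ := key (m - 1) (by omega)
  have hq1 : 0 < cardFactors (Nat.card (T (m - 1))) := by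
    rw [Nat.pos_iff_ne_zero, Ne, cardFactors_eq_zero_iff_eq_zero_or_one]
    omega
  omega

end CycleSet

open ArithmeticFunction in
theorem cardFactors_prod_primes {n : ℕ} (p : Fin n → ℕ) (hp : ∀ i, (p i).Prime) :
    cardFactors (∏ i, p i) = n := by
  induction n with
  | zero => simp
  | succ n ih =>
    rw [Fin.prod_univ_succ, cardFactors_mul (hp 0).ne_zero
      (Finset.prod_ne_zero_iff.2 fun i _ => (hp _).ne_zero), cardFactors_apply_prime (hp 0),
      ih _ fun i => hp _, add_comm]

open CycleSet

theorem statement_6 {X : Type} [Finite X] (C : CycleSet X)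
    (hnd : C.Nondeg) (hind : C.Indec)
    (n : ℕ) (hn : 1 ≤ n) (p : Fin n → ℕ)
    (hp : ∀ i, (p i).Prime) (hinj : Function.Injective p)
    (hcard : Nat.card X = ∏ i, p i) :
    fplEq C n := by
  have hΩ := cardFactors_prod_primes p hp
  have hsq : Squarefree (∏ i, p i) :=
    Finset.squarefree_prod_of_pairwise_isCoprime
      (fun i _ j _ hij => Nat.coprime_iff_isRelPrime.1
        ((Nat.coprime_primes (hp i) (hp j)).2 fun h => hij (hinj h)))
      fun i _ => (hp i).prime.squarefree
  rw [← hcard] at hΩ hsq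
  have hX : 1 < Nat.card X := by
    by_contra! h
    interval_cases Nat.card X <;> simp at hΩ <;> omega
  obtain ⟨n, rfl⟩ : ∃ l, n = l + 1 := ⟨n - 1, by omega⟩
  refine ⟨hn, hasChain_of_squarefree n C hnd hind hsq hΩ, fun m _ hm => ?_⟩
  rw [← hΩ]
  exact le_of_hasChain hind hX hm
end

section
/- Let X be a finite non-degenerate cycle set of finite multipermutation level with |X| > 1. If for some x, y ∈ X the length of the cycle of the permutation σ_x containing y (the least positive integer k with σ_x^k(y) = y) is coprime to |X|, then X is decomposable, i.e., G(X) does not act transitively on X. -/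
open CycleSet

/-- `X` has finite multipermutation level: there is a finite tower of retractions
(each step identifying exactly the elements with the same left multiplication)
ending in a singleton. -/
def HasFiniteMPL {X : Type} [Finite X] (C : CycleSet X) : Prop :=
  ∃ (n : ℕ) (T : ℕ → Type) (_ : ∀ i, Finite (T i)) (CS : ∀ i, CycleSet (T i)) (e : X → T 0),
    Function.Bijective e ∧ IsHom C (CS 0) e ∧
    (∀ i, i < n → ∃ p : T i → T (i + 1),
      Function.Surjective p ∧ IsHom (CS i) (CS (i + 1)) p ∧
        ∀ a b : T i, p a = p b ↔ (CS i).op a = (CS i).op b) ∧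
    Subsingleton (T n)

/-- The last stage of the tower of retractions that is not a singleton: an epimorphic image of `C`
all of whose left multiplications coincide. -/
theorem exists_trivial_image {X : Type} [Finite X] (C : CycleSet X)
    (hmpl : HasFiniteMPL C) (hcard : 1 < Nat.card X) :
    ∃ (Y : Type) (_ : Finite Y) (D : CycleSet Y) (f : X → Y),
      1 < Nat.card Y ∧ Function.Surjective f ∧ IsHom C D f ∧ ∀ a b, D.op a = D.op b := by
  classical
  obtain ⟨n, T, hT, CS, e, he, hhom, hstep, hn⟩ := hmpl
  have hmap : ∀ i, i ≤ n → ∃ f : X → T i, Function.Surjective f ∧ IsHom C (CS i) f := by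
    intro i
    induction i with
    | zero => exact fun _ => ⟨e, he.2, hhom⟩
    | succ i ih =>
      intro hi
      obtain ⟨f, hf, hfh⟩ := ih (by omega)
      obtain ⟨p, hp, hph, -⟩ := hstep i (by omega)
      exact ⟨p ∘ f, hp.comp hf, fun a b => by simp [hfh a b, hph (f a) (f b)]⟩
  have h0 : ¬ Subsingleton (T 0) := by
    intro h
    rw [Nat.card_congr (Equiv.ofBijective e he)] at hcard
    have := Finite.card_le_one_iff_subsingleton.2 h
    omega
  have hex : ∃ i, Subsingleton (T i) := ⟨n, hn⟩
  obtain ⟨i, hi⟩ : ∃ i, Nat.find hex = i + 1 :=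
    Nat.exists_eq_succ_of_ne_zero fun h => h0 (h ▸ Nat.find_spec hex)
  have hle : Nat.find hex ≤ n := Nat.find_min' hex hn
  have hs : Subsingleton (T (i + 1)) := hi ▸ Nat.find_spec hex
  have hns : ¬ Subsingleton (T i) := Nat.find_min hex (by omega)
  obtain ⟨f, hf, hfh⟩ := hmap i (by omega)
  obtain ⟨p, -, -, hp⟩ := hstep i (by omega)
  refine ⟨T i, hT i, CS i, f, ?_, hf, hfh, fun a b => (hp a b).1 (Subsingleton.elim _ _)⟩
  by_contra h
  exact hns (Finite.card_le_one_iff_subsingleton.1 (by omega))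

/-- A permutation whose powers act transitively is a single cycle. -/
theorem minimalPeriod_eq_card_of_zpow_transitive {Y : Type} [Finite Y] (τ : Equiv.Perm Y) (b : Y)
    (h : ∀ c, ∃ m : ℤ, (τ ^ m) b = c) : Function.minimalPeriod τ b = Nat.card Y := by
  have := Fintype.ofFinite (MulAction.orbit (Subgroup.zpowers τ) b)
  have horb : MulAction.orbit (Subgroup.zpowers τ) b = Set.univ := by
    refine Set.eq_univ_of_forall fun c => ?_
    obtain ⟨m, hm⟩ := h c
    exact ⟨⟨τ ^ m, m, rfl⟩, hm⟩
  have h1 := MulAction.minimalPeriod_eq_card (a := τ) (b := b)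
  rw [← Nat.card_eq_fintype_card, horb, Nat.card_univ] at h1
  exact h1

/-- If `f` is equivariant for a transitive family of permutations, then its fibres are
equinumerous, so the size of its image divides that of its domain. -/
theorem card_dvd_card_of_transitive {X Y : Type} [Nonempty X] (f : X → Y)
    (hf : Function.Surjective f)
    (h : ∀ a b : X, ∃ (g : Equiv.Perm X) (k : Equiv.Perm Y), g a = b ∧ ∀ c, f (g c) = k (f c)) :
    Nat.card Y ∣ Nat.card X := by
  obtain ⟨a₀⟩ := ‹Nonempty X›
  have hfib : ∀ y, Nonempty ({c // f c = y} ≃ {c // f c = f a₀}) := by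
    intro y
    obtain ⟨a, rfl⟩ := hf y
    obtain ⟨g, k, hg, hk⟩ := h a a₀
    refine ⟨g.subtypeEquiv fun c => ?_⟩
    rw [← hg, hk, hk, k.injective.eq_iff]
  have e : X ≃ Y × {c // f c = f a₀} :=
    (Equiv.sigmaFiberEquiv f).symm.trans
      ((Equiv.sigmaCongrRight fun y => (hfib y).some).trans (Equiv.sigmaEquivProd _ _))
  rw [Nat.card_congr e, Nat.card_prod]
  exact dvd_mul_right _ _

theorem statement_9 {X : Type} [Finite X] (C : CycleSet X)
    (hnd : C.Nondeg) (hmpl : HasFiniteMPL C) (hcard : 1 < Nat.card X)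
    (x y : X)
    (hcop : Nat.Coprime (Function.minimalPeriod (C.op x) y) (Nat.card X)) :
    ¬ C.Indec := by
  intro hind
  obtain ⟨Y, _, D, f, hY, hf, hfh, hD⟩ := exists_trivial_image C hmpl hcard
  let τ : Equiv.Perm Y := D.sigma (f x)
  have hτ : ∀ a b, f (C.op a b) = τ (f b) := fun a b => by
    rw [hfh, hD (f a) (f x)]
    rfl
  have hG : ∀ g ∈ C.G, ∃ m : ℤ, ∀ c, f (g c) = (τ ^ m) (f c) := by
    intro g hg
    induction hg using Subgroup.closure_induction with
    | mem g hg =>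
      obtain ⟨a, rfl⟩ := hg
      exact ⟨1, fun c => by rw [zpow_one]; exact hτ a c⟩
    | one => exact ⟨0, fun c => by simp⟩
    | mul g h _ _ ihg ihh =>
      obtain ⟨m, hm⟩ := ihg
      obtain ⟨l, hl⟩ := ihh
      exact ⟨m + l, fun c => by rw [Equiv.Perm.mul_apply, hm, hl, zpow_add, Equiv.Perm.mul_apply]⟩
    | inv g _ ih =>
      obtain ⟨m, hm⟩ := ih
      refine ⟨-m, fun c => ?_⟩
      rw [zpow_neg, Equiv.Perm.eq_inv_iff_eq, ← hm, ← Equiv.Perm.mul_apply, mul_inv_cancel,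
        Equiv.Perm.one_apply]
  have hper : Function.minimalPeriod τ (f y) = Nat.card Y := by
    refine minimalPeriod_eq_card_of_zpow_transitive τ (f y) fun c => ?_
    obtain ⟨b, rfl⟩ := hf c
    obtain ⟨g, hg, rfl⟩ := hind y b
    obtain ⟨m, hm⟩ := hG g hg
    exact ⟨m, (hm y).symm⟩
  have hdvd1 : Nat.card Y ∣ Function.minimalPeriod (C.op x) y := by
    rw [← hper]
    apply Function.IsPeriodicPt.minimalPeriod_dvd
    exact (Function.isPeriodicPt_minimalPeriod (C.op x) y).map (hτ x)
  have hdvd2 : Nat.card Y ∣ Nat.card X := by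
    have : Nonempty X := ⟨x⟩
    refine card_dvd_card_of_transitive f hf fun a b => ?_
    obtain ⟨g, hg, hab⟩ := hind a b
    obtain ⟨m, hm⟩ := hG g hg
    exact ⟨g, τ ^ m, hab, hm⟩
  have := Nat.eq_one_of_dvd_coprimes hcop hdvd1 hdvd2
  omega
end
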